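/- Let n ≥ 1 and let M be a model of PA⁻ + IΣn. Suppose that: there is a Σ_{n+1}-definable injection from the whole of M into [0,a) for some a ∈ M; N is an extension of M such that N = M[c] for some c ∈ N with c < a, meaning every element of N equals f(c) for some function f coded in M with domain [0,a); and N is a Σ_{n+1}-elementary cofinal extension of M. Then there is a Σ_{n+1}-definable (in N, with parameters from N) injection from the whole of N into [0,a). -/

import Mathlib

/- Shared development: first-order arithmetic in the language {0,1,+,·,<},
   the arithmetic hierarchy, fragments of arithmetic, and coded finite
   combinatorics inside models. -/

open FirstOrder Language

namespace ArithFC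

/-- Function symbols of the language of arithmetic: 0, 1, +, ·. -/
inductive Func : ℕ → Type
  | zero : Func 0
  | one : Func 0
  | add : Func 2
  | mul : Func 2

/-- Relation symbols of the language of arithmetic: <. -/
inductive Rel : ℕ → Type
  | lt : Rel 2

/-- The first-order language {0, 1, +, ·, <}. -/
def lang : Language :=
  { Functions := Func, Relations := Rel }

section Instances

variable (M : Type) [lang.Structure M]

instance : Zero M := ⟨Structure.funMap (L := lang) Func.zero ![]⟩
instance : One M := ⟨Structure.funMap (L := lang) Func.one ![]⟩
instance : Add M := ⟨fun x y => Structure.funMap (L := lang) Func.add ![x, y]⟩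
instance : Mul M := ⟨fun x y => Structure.funMap (L := lang) Func.mul ![x, y]⟩
instance : LT M := ⟨fun x y => Structure.RelMap (L := lang) Rel.lt ![x, y]⟩
instance : LE M := ⟨fun x y => x < y ∨ x = y⟩

end Instances

/-- The numeral `n` in a model. -/
def numM (M : Type) [lang.Structure M] : ℕ → M
  | 0 => 0
  | n + 1 => numM M n + 1

/-- `b` is nonstandard (greater than every numeral). -/
def Nonstd {M : Type} [lang.Structure M] (b : M) : Prop := ∀ n : ℕ, numM M n < b

/-- The atomic formula `t < u`. -/
def ltFm {α : Type} {n : ℕ} (t u : lang.Term (α ⊕ Fin n)) : lang.BoundedFormula α n :=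
  BoundedFormula.rel (Rel.lt : lang.Relations 2) ![t, u]

/-- Δ₀ formulas: built from atomic formulas by boolean connectives and
bounded universal quantification (this generates, up to logical equivalence,
the usual class of bounded formulas). -/
inductive IsDelta0 {α : Type} : ∀ n : ℕ, lang.BoundedFormula α n → Prop
  | falsum (n : ℕ) : IsDelta0 n BoundedFormula.falsum
  | equal (n : ℕ) (t u : lang.Term (α ⊕ Fin n)) : IsDelta0 n (BoundedFormula.equal t u)
  | rel (n l : ℕ) (R : lang.Relations l) (ts : Fin l → lang.Term (α ⊕ Fin n)) :
      IsDelta0 n (BoundedFormula.rel R ts)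
  | imp (n : ℕ) {φ ψ : lang.BoundedFormula α n} :
      IsDelta0 n φ → IsDelta0 n ψ → IsDelta0 n (φ.imp ψ)
  | bdAll (n : ℕ) (t : lang.Term (α ⊕ Fin n)) {φ : lang.BoundedFormula α (n + 1)} :
      IsDelta0 (n + 1) φ →
      IsDelta0 n
        (BoundedFormula.all ((ltFm (Term.var (Sum.inr (Fin.last n))) (t.liftAt 1 n)).imp φ))

mutual
  /-- Σ_m formulas. -/
  inductive SigmaFm {α : Type} : ℕ → ∀ n : ℕ, lang.BoundedFormula α n → Prop
    | delta0 (m n : ℕ) {φ : lang.BoundedFormula α n} : IsDelta0 n φ → SigmaFm m n φ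
    | ofPi (m n : ℕ) {φ : lang.BoundedFormula α n} : PiFm m n φ → SigmaFm (m + 1) n φ
    | ex (m n : ℕ) {φ : lang.BoundedFormula α (n + 1)} :
        SigmaFm (m + 1) (n + 1) φ → SigmaFm (m + 1) n φ.ex
  /-- Π_m formulas. -/
  inductive PiFm {α : Type} : ℕ → ∀ n : ℕ, lang.BoundedFormula α n → Prop
    | delta0 (m n : ℕ) {φ : lang.BoundedFormula α n} : IsDelta0 n φ → PiFm m n φ
    | ofSigma (m n : ℕ) {φ : lang.BoundedFormula α n} : SigmaFm m n φ → PiFm (m + 1) n φ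
    | all (m n : ℕ) {φ : lang.BoundedFormula α (n + 1)} :
        PiFm (m + 1) (n + 1) φ → PiFm (m + 1) n φ.all
end

/-- A `k`-ary relation on `M` is Σ_m-definable (with parameters from `M`). -/
def IsSigmaDef (m : ℕ) (M : Type) [lang.Structure M] {k : ℕ} (R : (Fin k → M) → Prop) : Prop :=
  ∃ (p : ℕ) (φ : lang.BoundedFormula (Fin k ⊕ Fin p) 0) (w : Fin p → M),
    SigmaFm m 0 φ ∧ ∀ v : Fin k → M, R v ↔ φ.Realize (Sum.elim v w) finZeroElim

/-- A subset of `M` is Σ_m-definable with parameters. -/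
def SigmaDef1 (m : ℕ) (M : Type) [lang.Structure M] (A : Set M) : Prop :=
  IsSigmaDef m M (k := 1) fun v => v 0 ∈ A

/-- A binary relation on `M` is Σ_m-definable with parameters. -/
def SigmaDef2 (m : ℕ) (M : Type) [lang.Structure M] (R : M → M → Prop) : Prop :=
  IsSigmaDef m M (k := 2) fun v => R (v 0) (v 1)

/-- A ternary relation on `M` is Σ_m-definable with parameters. -/
def SigmaDef3 (m : ℕ) (M : Type) [lang.Structure M] (R : M → M → M → Prop) : Prop :=
  IsSigmaDef m M (k := 3) fun v => R (v 0) (v 1) (v 2)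

/-- `M` is a model of PA⁻ (the nonnegative part of a discretely ordered
commutative semiring). -/
structure PAm (M : Type) [lang.Structure M] : Prop where
  add_assoc : ∀ x y z : M, x + y + z = x + (y + z)
  add_comm : ∀ x y : M, x + y = y + x
  mul_assoc : ∀ x y z : M, x * y * z = x * (y * z)
  mul_comm : ∀ x y : M, x * y = y * x
  ldistrib : ∀ x y z : M, x * (y + z) = x * y + x * z
  add_zero : ∀ x : M, x + 0 = x
  mul_zero : ∀ x : M, x * 0 = 0
  mul_one : ∀ x : M, x * 1 = x
  lt_trans : ∀ x y z : M, x < y → y < z → x < z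
  lt_irrefl : ∀ x : M, ¬x < x
  lt_total : ∀ x y : M, x < y ∨ x = y ∨ y < x
  add_lt_add : ∀ x y z : M, x < y → x + z < y + z
  mul_lt_mul : ∀ x y z : M, x < y → 0 < z → x * z < y * z
  sub_exists : ∀ x y : M, x < y → ∃ z, x + z = y
  zero_lt_one : (0 : M) < 1
  discrete : ∀ x : M, 0 < x → (1 : M) ≤ x
  zero_le : ∀ x : M, (0 : M) ≤ x

/-- `M` satisfies the Σ_m-induction scheme (with parameters). -/
def ISig (m : ℕ) (M : Type) [lang.Structure M] : Prop :=
  ∀ A : Set M, SigmaDef1 m M A → (0 : M) ∈ A → (∀ x, x ∈ A → x + 1 ∈ A) → ∀ x, x ∈ A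

/-- `M` satisfies the Σ_m-collection (bounding) scheme (with parameters). -/
def BSig (m : ℕ) (M : Type) [lang.Structure M] : Prop :=
  ∀ R : M → M → Prop, SigmaDef2 m M R → ∀ a : M,
    (∀ x, x < a → ∃ y, R x y) → ∃ b, ∀ x, x < a → ∃ y, y < b ∧ R x y

section Coding

variable {M : Type} [lang.Structure M]

/-- `z` is the Cantor pair `⟨x, y⟩`: `2z = (x+y)(x+y+1) + 2y`. -/
def IsPairC (z x y : M) : Prop := z + z = (x + y) * (x + y + 1) + (y + y)

/-- Gödel's β-function: `x = a mod ((i+1)·b + 1)`. -/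
def BetaC (a b i x : M) : Prop :=
  x < (i + 1) * b + 1 ∧ ∃ q, a = q * ((i + 1) * b + 1) + x

/-- The sequence coded by `s` (via a Cantor pair of β-function data) has value `x`
at place `i`. -/
def SeqAt (s i x : M) : Prop := ∃ a b, IsPairC s a b ∧ BetaC a b i x

/-- `c` codes the M-finite set `X` of cardinality `card`: `c = ⟨card, s⟩` where `s`
codes the strictly increasing enumeration of `X` of length `card`. -/
def CodesFinset (c : M) (X : Set M) (card : M) : Prop :=
  ∃ s, IsPairC c card s ∧
    (∀ i, i < card → ∃ x, x ∈ X ∧ SeqAt s i x) ∧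
    (∀ i j x y, i < j → j < card → SeqAt s i x → SeqAt s j y → x < y) ∧
    (∀ x, x ∈ X ↔ ∃ i, i < card ∧ SeqAt s i x)

/-- `X` is an M-finite (coded) set. -/
def MFinite (X : Set M) : Prop := ∃ c card : M, CodesFinset c X card

/-- `d` codes an `e`-element subset `D` of `[0, y)`, i.e. an element of `[y]^e`. -/
def CodesTupleIn (d e y : M) (D : Set M) : Prop :=
  CodesFinset d D e ∧ ∀ z ∈ D, z < y

/-- `f` codes a (finite) function defined on all of `[0, a)`. -/
def CodesFunOn (f a : M) : Prop :=
  ∀ x, x < a → (∃ y, SeqAt f x y) ∧ ∀ y y', SeqAt f x y → SeqAt f x y' → y = y'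

/-- `X` is an M-coded subset of `[0, a)`. -/
def MCodedSubset (a : M) (X : Set M) : Prop :=
  MFinite X ∧ ∀ x ∈ X, x < a

end Coding

/-- An `M`-ultrafilter on `a`: an ultrafilter of the Boolean algebra of
M-finite subsets of `[0, a)`. -/
structure MUltra (M : Type) [lang.Structure M] (a : M) where
  sets : Set (Set M)
  mem_coded : ∀ X ∈ sets, MCodedSubset a X
  univ_mem : {x : M | x < a} ∈ sets
  superset_mem : ∀ X Y : Set M, X ∈ sets → MCodedSubset a Y → X ⊆ Y → Y ∈ sets
  inter_mem : ∀ X Y : Set M, X ∈ sets → Y ∈ sets → X ∩ Y ∈ sets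
  empty_not_mem : (∅ : Set M) ∉ sets
  ultra : ∀ X : Set M, MCodedSubset a X → X ∈ sets ∨ {x : M | x < a ∧ x ∉ X} ∈ sets

section Principles

variable (M : Type) [lang.Structure M]

/-- `F` is (the graph of) a Σ_m-definable injection from `[0, y)` into `[0, x)`. -/
def SigmaInjRel (m : ℕ) (F : M → M → Prop) (y x : M) : Prop :=
  SigmaDef2 m M F ∧
    (∀ u, u < y → ∃ v, v < x ∧ F u v) ∧
    (∀ u v v', u < y → F u v → F u v' → v = v') ∧
    (∀ u u' v, u < y → u' < y → F u v → F u' v → u = u')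

/-- There exists a Σ_m-definable injection from `[0, y)` into `[0, x)`. -/
def ExSigmaInj (m : ℕ) (y x : M) : Prop := ∃ F : M → M → Prop, SigmaInjRel M m F y x

/-- There exists a Σ_m-definable injection from all of `M` into `[0, a)`. -/
def SigmaInjWhole (m : ℕ) (a : M) : Prop :=
  ∃ F : M → M → Prop, SigmaDef2 m M F ∧
    (∀ u, ∃ v, v < a ∧ F u v) ∧
    (∀ u v v', F u v → F u v' → v = v') ∧
    (∀ u u' v, F u v → F u' v → u = u')

/-- CARD(Σ_m): no Σ_m-definable multivalued map sends `M` injectively below `a`. -/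
def CARD (m : ℕ) : Prop :=
  ∀ F : M → M → Prop, SigmaDef2 m M F → ∀ a : M,
    (∀ x, ∃ y, y < a ∧ F x y) →
      ∃ x0 x1 y, x0 ≠ x1 ∧ y < a ∧ F x0 y ∧ F x1 y

/-- GPHP(Σ_m): for every `x` there is `y` with no Σ_m-definable injection of
`[0,y)` into `[0,x)`. -/
def GPHP (m : ℕ) : Prop := ∀ x : M, ∃ y : M, ¬ExSigmaInj M m y x

/-- WPHP(Σ_m): for `x > 0` there is no Σ_m-definable injection of `[0,2x)` into `[0,x)`. -/
def WPHP (m : ℕ) : Prop := ∀ x : M, 0 < x → ¬ExSigmaInj M m (x + x) x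

/-- `C` is a Σ_m-definable `k`-coloring of `[y]^e` (acting on codes of
`e`-element subsets of `[0,y)`, independently of the chosen code). -/
def IsColoring (m : ℕ) (e y k : M) (C : M → M → Prop) : Prop :=
  SigmaDef2 m M C ∧
    (∀ d D, CodesTupleIn d e y D → ∃ i, i < k ∧ C d i) ∧
    (∀ d d' D i i', CodesTupleIn d e y D → CodesTupleIn d' e y D → C d i → C d' i' → i = i')

/-- FRT^e_k(Σ_m): every Σ_m-definable `k`-coloring of some `[y]^e` has an
M-finite homogeneous set of cardinality `x`, for every `x`. -/
def FRT (m : ℕ) (e k : M) : Prop :=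
  ∀ x : M, ∃ y : M, ∀ C : M → M → Prop, IsColoring M m e y k C →
    ∃ (c : M) (H : Set M), CodesFinset c H x ∧ (∀ z ∈ H, z < y) ∧
      ∃ i, ∀ d D, CodesFinset d D e → D ⊆ H → C d i

/-- fairFRT^e_k(Σ_m): the homogeneous set is required to be given as the range of a
Σ_m-definable injection from `[0,x)` into `[0,y)`. -/
def FairFRT (m : ℕ) (e k : M) : Prop :=
  ∀ x : M, ∃ y : M, ∀ C : M → M → Prop, IsColoring M m e y k C →
    ∃ H : M → M → Prop, SigmaInjRel M m H x y ∧
      ∃ i, ∀ d D, CodesFinset d D e → (∀ z ∈ D, ∃ u, u < x ∧ H u z) → C d i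

/-- `C` is a Σ_m-definable `k`-coloring of `[0, y)`. -/
def IsColoring1 (m : ℕ) (y k : M) (C : M → M → Prop) : Prop :=
  SigmaDef2 m M C ∧
    (∀ z, z < y → ∃ i, i < k ∧ C z i) ∧
    (∀ z i i', z < y → C z i → C z i' → i = i')

/-- FRT¹_k(Σ_m): every Σ_m-definable `k`-coloring of some `[0,y)` has an M-finite
homogeneous set of cardinality `x`, for every `x`. -/
def FRT1 (m : ℕ) (k : M) : Prop :=
  ∀ x : M, ∃ y : M, ∀ C : M → M → Prop, IsColoring1 M m y k C →
    ∃ (c : M) (H : Set M), CodesFinset c H x ∧ (∀ z ∈ H, z < y) ∧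
      ∃ i, ∀ z ∈ H, C z i

/-- fairFRT¹_k(Σ_m). -/
def FairFRT1 (m : ℕ) (k : M) : Prop :=
  ∀ x : M, ∃ y : M, ∀ C : M → M → Prop, IsColoring1 M m y k C →
    ∃ H : M → M → Prop, SigmaInjRel M m H x y ∧
      ∃ i, ∀ u v, u < x → H u v → C v i

end Principles

section Approx

variable {M : Type} [lang.Structure M]

/-- `f` is (the graph of) a partial function. -/
def IsPartialFun (f : M → M → Prop) : Prop := ∀ x y y', f x y → f x y' → y = y'

/-- `s` codes an approximation to the partial function `f` of length `b`. -/
def IsApprox (f : M → M → Prop) (s b : M) : Prop :=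
  (∀ i, i < b → ∃ v, SeqAt s i v) ∧
    (∀ i u v x y, i + 1 < b → SeqAt s i u → SeqAt s (i + 1) v → x ≤ u → f x y → y ≤ v)

/-- `s` codes a `g`-stretched approximation to the partial function `f` of length `b`. -/
def IsStretchedApprox (f g : M → M → Prop) (s b : M) : Prop :=
  (∀ i, i < b → ∃ v, SeqAt s i v) ∧
    (∀ i u w v x y, i + 1 < b → SeqAt s i u → g u w → SeqAt s (i + 1) v →
      x ≤ w → f x y → y ≤ v)

/-- The eventual (limit) value of `fun s => h s ·` is `x`. -/
def EvLim (h : M → M → Prop) (x : M) : Prop := ∃ s : M, ∀ t, s < t → h t x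

end Approx

/-- PΣ_m: every partial Σ_m-definable function admits approximations of every length. -/
def PSig (m : ℕ) (M : Type) [lang.Structure M] : Prop :=
  ∀ f : M → M → Prop, SigmaDef2 m M f → IsPartialFun f → ∀ b : M, ∃ s, IsApprox f s b

section Extensions

variable (M N : Type) [lang.Structure M] [lang.Structure N]

/-- `g : M → N` is Σ_m-elementary: Σ_m formulas with parameters from `M` transfer. -/
def SigmaElem (m : ℕ) (g : M → N) : Prop :=
  ∀ (p : ℕ) (φ : lang.BoundedFormula (Fin p) 0), SigmaFm m 0 φ →
    ∀ v : Fin p → M, (φ.Realize v finZeroElim ↔ φ.Realize (g ∘ v) finZeroElim)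

/-- The extension `g : M → N` is cofinal. -/
def Cofinal (g : M → N) : Prop := ∀ z : N, ∃ x : M, z ≤ g x

/-- `[0,a]^M = [0,a]^N`: every element of `N` below `g a` comes from `M`. -/
def SameBelow (g : M → N) (a : M) : Prop := ∀ z : N, z ≤ g a → ∃ x : M, g x = z

end Extensions

section Ramsey

variable {M : Type} [lang.Structure M]

/-- `f` is an M-coded `k`-coloring of `[y]^e` (assigning colors to codes of
`e`-subsets of `[0,y)`, independently of the code). -/
def CodedColoring (f e y k : M) : Prop :=
  (∀ d D, CodesTupleIn d e y D → ∃ i, i < k ∧ SeqAt f d i) ∧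
    (∀ d d' D i i', CodesTupleIn d e y D → CodesTupleIn d' e y D →
      SeqAt f d i → SeqAt f d' i' → i = i')

/-- The coded coloring `f` of `[y]^e` has an M-coded homogeneous set of cardinality `x`. -/
def CodedHomog (f e y x : M) : Prop :=
  ∃ (c : M) (H : Set M), CodesFinset c H x ∧ (∀ z ∈ H, z < y) ∧
    ∃ i, ∀ d D, CodesFinset d D e → D ⊆ H → SeqAt f d i

/-- `y = r(x, e, k)`: `y` is the least size guaranteeing coded homogeneous sets of
cardinality `x` for all coded `k`-colorings of `e`-subsets. -/
def IsRamsey (x e k y : M) : Prop :=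
  (∀ f, CodedColoring f e y k → CodedHomog f e y x) ∧
    (∀ y', y' < y → ∃ f, CodedColoring f e y' k ∧ ¬CodedHomog f e y' x)

/-- `y = r^(b)(x, e, k)`: the `b`-th iterate of the Ramsey function inside `M`. -/
def IterRamsey (x e k b y : M) : Prop :=
  ∃ s : M, SeqAt s 0 x ∧ SeqAt s b y ∧ (∀ i, i ≤ b → ∃ u, SeqAt s i u) ∧
    (∀ i u v, i < b → SeqAt s i u → SeqAt s (i + 1) v → IsRamsey u e k v)

end Ramsey

end ArithFC

/- Write `n = k + 1`. The injection `F` of `M` has the form `F u v ↔ ∃ z, ¬∃ y, P y ⟨z, u, v⟩` with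
`P` in `Π_k`. In `N`, send `d` to the last entry of the least triple `⟨z, u, v⟩` without `P`-witness
such that `v < a` and `u` codes a function with value `d` at `c`. A code `f ∈ M` of a function with
`f(c) = d` gives such a triple in `M`, so the map is total; it is injective because injectivity of
`F` is a `Π_{k+2}` statement, hence passes to `N`, and because `u` determines `d`.

The graph is `Σ_{k+2}`, without appealing to `IΣ_n` in `N`: the least triple is computed from a code
for the set of triples below a bound `b` that have a witness. By strong `Σ_{k+1}`-collection such
codes exist in `M` for every `b`, and since being a code is `Π_{k+1}` they remain codes in `N`; the
least number principle needed in `N` is then only the one for `Δ_0` formulas, which transfers. -/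

namespace ArithFC

open scoped Stream'

section OrderedSemiring

variable {K : Type*} [CommSemiring K] [LinearOrder K] [IsStrictOrderedRing K]
  [CanonicallyOrderedAdd K]

theorem dvd_of_dvd_add {a b c : K} (hb : a ∣ b) (hbc : a ∣ b + c) : a ∣ c := by
  obtain ⟨p, rfl⟩ := hb
  obtain ⟨q, hq⟩ := hbc
  rcases le_total p q with hpq | hqp
  · obtain ⟨d, rfl⟩ := exists_add_of_le hpq
    exact ⟨d, by grind⟩
  · have hle : a * q ≤ a * p := by gcongr
    have hc : c = 0 := le_antisymm (by grind) zero_le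
    exact hc ▸ dvd_zero a

/-- The modulus attached to the index `i` by Gödel's β-function with step `e`. -/
def betaModulus {K : Type*} [Add K] [Mul K] [One K] (e i : K) : K := (i + 1) * e + 1

theorem betaModulus_pos (e i : K) : 0 < betaModulus e i :=
  zero_lt_one.trans_le le_add_self

theorem one_lt_betaModulus {e : K} (he : 0 < e) (i : K) : 1 < betaModulus e i :=
  lt_add_of_pos_left _ (mul_pos (zero_lt_one.trans_le le_add_self) he)

theorem dvd_of_dvd_step_mul {e i d x : K} (hd : d ∣ e) (h : betaModulus e i ∣ d * x) :
    betaModulus e i ∣ x := by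
  obtain ⟨q, rfl⟩ := hd
  have hmul : betaModulus (d * q) i ∣ (i + 1) * q * (d * x) := h.mul_left _
  refine dvd_of_dvd_add hmul ⟨x, ?_⟩
  simp only [betaModulus]
  ring

-- `(j + 1) * betaModulus e i` and `(i + 1) * betaModulus e j` differ by `j - i`, which divides `e`.
theorem betaModulus_dvd_of_dvd_mul {e i j b x : K} (he : ∀ d, 0 < d → d ≤ b → d ∣ e)
    (hi : i < b) (hj : j < b) (hij : i ≠ j) (h : betaModulus e i ∣ betaModulus e j * x) :
    betaModulus e i ∣ x := by
  rcases lt_or_gt_of_ne hij with hlt | hlt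
  · obtain ⟨d, rfl⟩ := exists_add_of_le hlt.le
    have hd : d ∣ e := he d (pos_of_lt_add_right hlt) (le_add_self.trans hj.le)
    refine dvd_of_dvd_step_mul hd (dvd_of_dvd_add (h.mul_left (i + 1)) ⟨(i + d + 1) * x, ?_⟩)
    simp only [betaModulus]
    ring
  · obtain ⟨d, rfl⟩ := exists_add_of_le hlt.le
    have hd : d ∣ e := he d (pos_of_lt_add_right hlt) (le_add_self.trans hi.le)
    refine dvd_of_dvd_step_mul hd
      (dvd_of_dvd_add ((dvd_mul_right _ x).mul_left (j + 1)) ?_)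
    have heq : (j + 1) * (betaModulus e (j + d) * x) + d * x =
        (j + d + 1) * (betaModulus e j * x) := by
      simp only [betaModulus]
      ring
    exact heq ▸ h.mul_left _

variable [SuccAddOrder K]

theorem mul_add_injective_of_lt {q q' m x x' : K} (hx : x < m) (hx' : x' < m)
    (h : q * m + x = q' * m + x') : q = q' ∧ x = x' := by
  have step : ∀ {q q' x x' : K}, x < m → q < q' → q * m + x < q' * m + x' := by
    intro q q' x x' hx hq
    calc q * m + x < q * m + m := by gcongr
      _ = (q + 1) * m := by ring
      _ ≤ q' * m := by gcongr; exact Order.add_one_le_of_lt hq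
      _ ≤ q' * m + x' := le_self_add
  rcases lt_trichotomy q q' with hlt | rfl | hlt
  · exact absurd h (step hx hlt).ne
  · exact ⟨rfl, add_left_cancel h⟩
  · exact absurd h (step hx' hlt).ne'

theorem le_self_mul_self (x : K) : x ≤ x * x := by
  rcases eq_zero_or_pos x with rfl | hx
  · exact zero_le
  · exact le_mul_of_one_le_right zero_le (Order.one_le_iff_pos.2 hx)

/-- The pairing term `(x + y)² + y`, used next to Cantor's pairing because it is a term of the
language of arithmetic. -/
def quadPair {K : Type*} [Add K] [Mul K] (x y : K) : K := (x + y) * (x + y) + y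

theorem left_le_quadPair (x y : K) : x ≤ quadPair x y :=
  le_self_add.trans ((le_self_mul_self (x + y)).trans le_self_add)

theorem quadPair_lt_quadPair {x y x' y' : K} (h : x + y < x' + y') :
    quadPair x y < quadPair x' y' := by
  set s := x + y
  calc s * s + y ≤ s * s + s := by gcongr; exact le_add_self
    _ < s * s + s + (s + 1) := lt_add_of_pos_right _ (zero_lt_one.trans_le le_add_self)
    _ = (s + 1) * (s + 1) := by ring
    _ ≤ (x' + y') * (x' + y') := by
      have hsucc : s + 1 ≤ x' + y' := Order.add_one_le_of_lt h
      gcongr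
    _ ≤ quadPair x' y' := le_self_add

theorem quadPair_inj {x y x' y' : K} (h : quadPair x y = quadPair x' y') : x = x' ∧ y = y' := by
  rcases lt_trichotomy (x + y) (x' + y') with hlt | hsum | hgt
  · exact absurd h (quadPair_lt_quadPair hlt).ne
  · rw [quadPair, quadPair, hsum] at h
    obtain rfl := add_left_cancel h
    exact ⟨add_right_cancel hsum, rfl⟩
  · exact absurd h (quadPair_lt_quadPair hgt).ne'

/-- Twice the value of Cantor's pairing function, which is the form in which `IsPairC` uses it. -/
def cantorDouble {K : Type*} [Add K] [Mul K] [One K] (x y : K) : K :=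
  (x + y) * (x + y + 1) + (y + y)

theorem cantorDouble_lt_cantorDouble {x y x' y' : K} (h : x + y < x' + y') :
    cantorDouble x y < cantorDouble x' y' := by
  set s := x + y
  calc s * (s + 1) + (y + y) ≤ s * (s + 1) + (s + s) := by gcongr <;> exact le_add_self
    _ < s * (s + 1) + (s + s) + (1 + 1) := lt_add_of_pos_right _ (zero_lt_one.trans_le le_add_self)
    _ = (s + 1) * (s + 1 + 1) := by ring
    _ ≤ (x' + y') * (x' + y' + 1) := by
      have hsucc : s + 1 ≤ x' + y' := Order.add_one_le_of_lt h
      gcongr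
    _ ≤ cantorDouble x' y' := le_self_add

theorem cantorDouble_inj {x y x' y' : K} (h : cantorDouble x y = cantorDouble x' y') :
    x = x' ∧ y = y' := by
  rcases lt_trichotomy (x + y) (x' + y') with hlt | hsum | hgt
  · exact absurd h (cantorDouble_lt_cantorDouble hlt).ne
  · rw [cantorDouble, cantorDouble, hsum] at h
    obtain rfl : y = y' := by grind
    exact ⟨add_right_cancel hsum, rfl⟩
  · exact absurd h (cantorDouble_lt_cantorDouble hgt).ne'

theorem add_le_of_add_self_eq_cantorDouble {x y z : K} (h : z + z = cantorDouble x y) :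
    x + y ≤ z := by
  have hdouble : (x + y) + (x + y) ≤ z + z :=
    calc (x + y) + (x + y) ≤ (x + y) * (x + y) + (x + y) := by gcongr; exact le_self_mul_self _
      _ = (x + y) * (x + y + 1) := (mul_add_one _ _).symm
      _ ≤ z + z := h ▸ le_self_add
  grind

end OrderedSemiring

section Model

variable {K : Type} [lang.Structure K]

instance [h : Fact (PAm K)] : CommSemiring K where
  add_assoc := h.out.add_assoc
  add_comm := h.out.add_comm
  zero_add x := by rw [h.out.add_comm]; exact h.out.add_zero x
  add_zero := h.out.add_zero
  mul_assoc := h.out.mul_assoc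
  mul_comm := h.out.mul_comm
  left_distrib := h.out.ldistrib
  right_distrib x y z := by simp only [h.out.mul_comm _ z, h.out.ldistrib]
  zero_mul x := by rw [h.out.mul_comm]; exact h.out.mul_zero x
  mul_zero := h.out.mul_zero
  one_mul x := by rw [h.out.mul_comm]; exact h.out.mul_one x
  mul_one := h.out.mul_one
  nsmul := nsmulRec

theorem PAm.lt_asymm (h : PAm K) {x y : K} (hxy : x < y) (hyx : y < x) : False :=
  h.lt_irrefl x (h.lt_trans x y x hxy hyx)

theorem PAm.le_trans (h : PAm K) {x y z : K} : x ≤ y → y ≤ z → x ≤ z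
  | Or.inl hxy, Or.inl hyz => Or.inl (h.lt_trans _ _ _ hxy hyz)
  | Or.inl hxy, Or.inr hyz => Or.inl (hyz ▸ hxy)
  | Or.inr hxy, hyz => hxy ▸ hyz

noncomputable instance [h : Fact (PAm K)] : LinearOrder K where
  le_refl _ := Or.inr rfl
  le_trans _ _ _ := h.out.le_trans
  le_antisymm x y
    | Or.inl hxy, Or.inl hyx => (h.out.lt_asymm hxy hyx).elim
    | Or.inr hxy, _ => hxy
    | _, Or.inr hyx => hyx.symm
  le_total x y := by
    rcases h.out.lt_total x y with hlt | heq | hgt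
    exacts [Or.inl (Or.inl hlt), Or.inl (Or.inr heq), Or.inr (Or.inl hgt)]
  lt_iff_le_not_ge x y :=
    ⟨fun hxy => ⟨Or.inl hxy, fun hyx => hyx.elim (h.out.lt_asymm hxy)
        fun heq => h.out.lt_irrefl x (heq ▸ hxy)⟩,
      fun ⟨hle, hnot⟩ => hle.resolve_right fun heq => hnot (Or.inr heq.symm)⟩
  toDecidableLE := Classical.decRel _

instance [h : Fact (PAm K)] : IsStrictOrderedRing K :=
  have add_lt : ∀ x y z : K, x < y → z + x < z + y := fun x y z hxy => by
    simpa only [add_comm z] using h.out.add_lt_add x y z hxy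
  have mul_lt : ∀ x y z : K, x < y → 0 < z → z * x < z * y := fun x y z hxy hz => by
    simpa only [mul_comm z] using h.out.mul_lt_mul x y z hxy hz
  { add_le_add_left := fun x y hxy z =>
      hxy.elim (fun hlt => Or.inl (h.out.add_lt_add x y z hlt)) fun heq => heq ▸ le_rfl
    le_of_add_le_add_left := fun z x y hle =>
      le_of_not_gt fun hyx => (add_lt y x z hyx).not_ge hle
    zero_le_one := Or.inl h.out.zero_lt_one
    exists_pair_ne := ⟨0, 1, fun h01 => h.out.lt_irrefl 0 (h01 ▸ h.out.zero_lt_one)⟩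
    mul_lt_mul_of_pos_left := fun z hz x y hxy => mul_lt x y z hxy hz
    mul_lt_mul_of_pos_right := fun z hz x y hxy => h.out.mul_lt_mul x y z hxy hz }

instance [h : Fact (PAm K)] : CanonicallyOrderedAdd K where
  exists_add_of_le {x y}
    | Or.inl hlt => (h.out.sub_exists x y hlt).imp fun _ => Eq.symm
    | Or.inr heq => ⟨0, by rw [add_zero, heq]⟩
  le_add_self x y := le_add_of_nonneg_left (h.out.zero_le y)
  le_self_add x y := le_add_of_nonneg_right (h.out.zero_le y)

noncomputable instance [h : Fact (PAm K)] : SuccAddOrder K :=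
  { succ := (· + 1)
    le_succ := fun _ => le_self_add
    max_of_succ_le := fun {x} hx => absurd hx (lt_add_one x).not_ge
    succ_le_of_lt := fun {x y} hxy => by
      obtain ⟨z, rfl⟩ := exists_add_of_le hxy.le
      exact add_le_add_right (h.out.discrete z (pos_of_lt_add_right hxy)) x
    succ_eq_add_one := fun _ => rfl }

end Model

section UniformTerms

/-- A predicate on assignments, given uniformly in all structures for the language of arithmetic.
The classes of definable predicates below are classes of uniform predicates: an assignment carries
both the arguments and the parameters, and a quantified variable is pushed on its front. -/
abbrev UPred := ∀ (K : Type) [lang.Structure K], Stream' K → Prop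

/-- A function of assignments, given uniformly in all structures. -/
abbrev UTerm := ∀ (K : Type) [lang.Structure K], Stream' K → K

/-- A transformation of assignments, given uniformly in all structures. -/
abbrev UAssign := ∀ (K : Type) [lang.Structure K], Stream' K → Stream' K

/-- The uniform function `t` is the value of a term of the language. -/
def IsUTerm (t : UTerm) : Prop :=
  ∃ τ : lang.Term ℕ, ∀ (K : Type) [lang.Structure K] (v : Stream' K), t K v = τ.realize v.get

/-- The uniform transformation `σ` is a substitution of terms of the language. -/
def IsUAssign (σ : UAssign) : Prop :=
  ∃ τ : Stream' (lang.Term ℕ), ∀ (K : Type) [lang.Structure K] (v : Stream' K),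
    σ K v = τ.map fun τ => τ.realize v.get

theorem IsUTerm.var (i : ℕ) : IsUTerm fun _ _ v => v.get i := ⟨Term.var i, fun _ _ _ => rfl⟩

theorem IsUTerm.zero : IsUTerm fun _ _ _ => 0 :=
  ⟨Constants.term (L := lang) Func.zero, fun K _ _ =>
    (congrArg (Structure.funMap (L := lang) (M := K) Func.zero) (Subsingleton.elim _ _)).trans
      Term.realize_constants.symm⟩

theorem IsUTerm.one : IsUTerm fun _ _ _ => 1 :=
  ⟨Constants.term (L := lang) Func.one, fun K _ _ =>
    (congrArg (Structure.funMap (L := lang) (M := K) Func.one) (Subsingleton.elim _ _)).trans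
      Term.realize_constants.symm⟩

theorem IsUTerm.add {s t : UTerm} : IsUTerm s → IsUTerm t → IsUTerm fun K _ v => s K v + t K v
  | ⟨σ, hσ⟩, ⟨τ, hτ⟩ => ⟨Functions.apply₂ (L := lang) Func.add σ τ, fun _ _ _ => by
    beta_reduce; rw [hσ, hτ]; exact Term.realize_functions_apply₂.symm⟩

theorem IsUTerm.mul {s t : UTerm} : IsUTerm s → IsUTerm t → IsUTerm fun K _ v => s K v * t K v
  | ⟨σ, hσ⟩, ⟨τ, hτ⟩ => ⟨Functions.apply₂ (L := lang) Func.mul σ τ, fun _ _ _ => by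
    beta_reduce; rw [hσ, hτ]; exact Term.realize_functions_apply₂.symm⟩

theorem IsUTerm.quadPair {s t : UTerm} (hs : IsUTerm s) (ht : IsUTerm t) :
    IsUTerm fun K _ v => quadPair (s K v) (t K v) :=
  .add (.mul (.add hs ht) (.add hs ht)) ht

theorem IsUTerm.betaModulus {s t : UTerm} (hs : IsUTerm s) (ht : IsUTerm t) :
    IsUTerm fun K _ v => betaModulus (s K v) (t K v) :=
  .add (.mul (.add ht .one) hs) .one

theorem IsUAssign.drop (n : ℕ) : IsUAssign fun _ _ v => v.drop n :=
  ⟨(Stream'.nats.drop n).map Term.var, fun _ _ _ => rfl⟩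

theorem IsUAssign.cons {t : UTerm} {σ : UAssign} :
    IsUTerm t → IsUAssign σ → IsUAssign fun K _ v => t K v :: σ K v
  | ⟨τ, hτ⟩, ⟨ρ, hρ⟩ => ⟨τ :: ρ, fun K _ v => by simp only [hτ, hρ, Stream'.map_cons]⟩

theorem IsUTerm.comp {t : UTerm} {σ : UAssign} :
    IsUTerm t → IsUAssign σ → IsUTerm fun K _ v => t K (σ K v)
  | ⟨τ, hτ⟩, ⟨ρ, hρ⟩ => ⟨τ.subst ρ.get, fun K _ v => by
    simp only [hτ, hρ, Term.realize_subst]; rfl⟩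

theorem IsUAssign.comp {σ ρ : UAssign} :
    IsUAssign σ → IsUAssign ρ → IsUAssign fun K _ v => σ K (ρ K v)
  | ⟨s, hs⟩, ⟨r, hr⟩ => ⟨s.map fun τ => τ.subst r.get, fun K _ v => by
    simp only [hs, hr, Stream'.map_map, Function.comp_def, Term.realize_subst]; rfl⟩

end UniformTerms

section UniformDelta0

theorem realize_ltFm {α : Type} {n : ℕ} {t u : lang.Term (α ⊕ Fin n)} {K : Type}
    [lang.Structure K] {v : α → K} {xs : Fin n → K} :
    (ltFm t u).Realize v xs ↔ t.realize (Sum.elim v xs) < u.realize (Sum.elim v xs) :=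
  BoundedFormula.realize_rel₂

theorem realize_liftAt_snoc {α : Type} {n : ℕ} (t : lang.Term (α ⊕ Fin n)) {K : Type}
    [lang.Structure K] (v : α → K) (xs : Fin n → K) (x : K) :
    (t.liftAt 1 n).realize (Sum.elim v (Fin.snoc xs x : Fin (n + 1) → K)) =
      t.realize (Sum.elim v xs) := by
  rw [Term.realize_liftAt]
  congr 1
  ext (i | i)
  · rfl
  · simp only [Function.comp_apply, Sum.map_inr, i.is_lt, if_true, Sum.elim_inr]
    exact Fin.snoc_castSucc (α := fun _ => K) x xs i

/-- The substitution `σ` extended by the variable of a new innermost quantifier. -/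
def liftSubst {α : Type} {n : ℕ} (σ : Stream' (lang.Term (α ⊕ Fin n))) :
    Stream' (lang.Term (α ⊕ Fin (n + 1))) :=
  Term.var (Sum.inr (Fin.last n)) :: σ.map (Term.liftAt 1 n)

theorem map_realize_liftSubst {α : Type} {n : ℕ} (σ : Stream' (lang.Term (α ⊕ Fin n))) {K : Type}
    [lang.Structure K] (v : α → K) (xs : Fin n → K) (x : K) :
    (liftSubst σ).map (fun τ => τ.realize (Sum.elim v (Fin.snoc xs x : Fin (n + 1) → K))) =
      x :: σ.map fun τ => τ.realize (Sum.elim v xs) := by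
  simp only [liftSubst, Stream'.map_cons, Stream'.map_map, Function.comp_def, realize_liftAt_snoc,
    Term.realize_var, Sum.elim_inr, Fin.snoc_last]

/-- The uniform predicate `R` is defined by a Δ₀ formula, with arbitrary terms substituted for
its variables. -/
def UDelta0 (R : UPred) : Prop :=
  ∀ (α : Type) (n : ℕ) (σ : Stream' (lang.Term (α ⊕ Fin n))),
    ∃ φ : lang.BoundedFormula α n, IsDelta0 n φ ∧
      ∀ (K : Type) [lang.Structure K] (v : α → K) (xs : Fin n → K),
        φ.Realize v xs ↔ R K (σ.map fun τ => τ.realize (Sum.elim v xs))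

namespace UDelta0

variable {R S : UPred} {s t : UTerm} {B : ∀ (K : Type) [lang.Structure K], K → Stream' K → Prop}

theorem congr (hR : UDelta0 R)
    (h : ∀ (K : Type) [lang.Structure K] (v : Stream' K), R K v ↔ S K v) : UDelta0 S :=
  fun α n σ => (hR α n σ).imp fun _ hφ => ⟨hφ.1, fun K _ v xs => (hφ.2 K v xs).trans (h K _)⟩

theorem falsum : UDelta0 fun _ _ _ => False := fun _ n _ =>
  ⟨BoundedFormula.falsum, .falsum n, fun _ _ _ _ => Iff.rfl⟩

theorem imp (hR : UDelta0 R) (hS : UDelta0 S) : UDelta0 fun K _ v => R K v → S K v := by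
  intro α n σ
  obtain ⟨φ, hφ, hφR⟩ := hR α n σ
  obtain ⟨ψ, hψ, hψS⟩ := hS α n σ
  exact ⟨φ.imp ψ, .imp n hφ hψ, fun K _ v xs => by
    rw [BoundedFormula.realize_imp, hφR, hψS]⟩

theorem not (hR : UDelta0 R) : UDelta0 fun K _ v => ¬R K v := hR.imp falsum

theorem and (hR : UDelta0 R) (hS : UDelta0 S) : UDelta0 fun K _ v => R K v ∧ S K v :=
  (hR.imp hS.not).not.congr fun _ _ _ => by tauto

theorem or (hR : UDelta0 R) (hS : UDelta0 S) : UDelta0 fun K _ v => R K v ∨ S K v :=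
  (hR.not.imp hS).congr fun _ _ _ => by tauto

theorem eq (hs : IsUTerm s) (ht : IsUTerm t) : UDelta0 fun K _ v => s K v = t K v := by
  intro α n ρ
  obtain ⟨σ, hσ⟩ := hs
  obtain ⟨τ, hτ⟩ := ht
  refine ⟨(σ.subst ρ.get).bdEqual (τ.subst ρ.get), .equal _ _ _, fun K _ v xs => ?_⟩
  simp only [BoundedFormula.realize_bdEqual, Term.realize_subst, hσ, hτ]
  rfl

theorem lt (hs : IsUTerm s) (ht : IsUTerm t) : UDelta0 fun K _ v => s K v < t K v := by
  intro α n ρ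
  obtain ⟨σ, hσ⟩ := hs
  obtain ⟨τ, hτ⟩ := ht
  refine ⟨ltFm (σ.subst ρ.get) (τ.subst ρ.get), .rel _ _ _ _, fun K _ v xs => ?_⟩
  simp only [realize_ltFm, Term.realize_subst, hσ, hτ]
  rfl

theorem le (hs : IsUTerm s) (ht : IsUTerm t) : UDelta0 fun K _ v => s K v ≤ t K v :=
  (lt hs ht).or (eq hs ht)

theorem ball (ht : IsUTerm t) (hB : UDelta0 fun K _ v => B K v.head v.tail) :
    UDelta0 fun K _ v => ∀ x < t K v, B K x v := by
  intro α n ρ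
  obtain ⟨τ, hτ⟩ := ht
  obtain ⟨φ, hφ, hφB⟩ := hB α (n + 1) (liftSubst ρ)
  refine ⟨_, .bdAll n (τ.subst ρ.get) hφ, fun K _ v xs => forall_congr' fun x => ?_⟩
  rw [BoundedFormula.realize_imp, realize_ltFm, hφB, map_realize_liftSubst, realize_liftAt_snoc,
    Term.realize_subst, Term.realize_var, Sum.elim_inr, Fin.snoc_last, hτ]
  rfl

theorem bex (ht : IsUTerm t) (hB : UDelta0 fun K _ v => B K v.head v.tail) :
    UDelta0 fun K _ v => ∃ x < t K v, B K x v :=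
  (ball (B := fun K _ x v => ¬B K x v) ht hB.not).not.congr fun _ _ _ => by push Not; rfl

theorem comp {σ : UAssign} (hR : UDelta0 R) (hσ : IsUAssign σ) :
    UDelta0 fun K _ v => R K (σ K v) := by
  intro α n ρ
  obtain ⟨s, hs⟩ := hσ
  obtain ⟨φ, hφ, hφR⟩ := hR α n (s.map fun τ => τ.subst ρ.get)
  refine ⟨φ, hφ, fun K _ v xs => ?_⟩
  simp only [hφR, hs, Stream'.map_map, Function.comp_def, Term.realize_subst]
  rfl

end UDelta0

end UniformDelta0

section UniformHierarchy

/-- The uniform predicate `R` is Σ_m over PA⁻, in the normal form in which every quantifier block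
is a single quantifier. -/
def USigma : ℕ → UPred → Prop
  | 0, R => ∃ Q : UPred, UDelta0 Q ∧
      ∀ (K : Type) [lang.Structure K] [Fact (PAm K)] (v : Stream' K), R K v ↔ Q K v
  | m + 1, R => ∃ Q : UPred, USigma m Q ∧
      ∀ (K : Type) [lang.Structure K] [Fact (PAm K)] (v : Stream' K), R K v ↔ ∃ x, ¬Q K (x :: v)

/-- The uniform predicate `R` is Π_m over PA⁻. -/
def UPi (m : ℕ) (R : UPred) : Prop := USigma m fun K _ v => ¬R K v

variable {m k : ℕ} {R S : UPred} {s t : UTerm} {σ : UAssign}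
  {B : ∀ (K : Type) [lang.Structure K], K → Stream' K → Prop}

theorem USigma.congr (hR : USigma m R)
    (h : ∀ (K : Type) [lang.Structure K] [Fact (PAm K)] (v : Stream' K), R K v ↔ S K v) :
    USigma m S := by
  cases m <;> exact hR.imp fun Q hQ => ⟨hQ.1, fun K _ _ v => (h K v).symm.trans (hQ.2 K v)⟩

theorem UPi.congr (hR : UPi m R)
    (h : ∀ (K : Type) [lang.Structure K] [Fact (PAm K)] (v : Stream' K), R K v ↔ S K v) :
    UPi m S :=
  USigma.congr hR fun K _ _ v => not_congr (h K v)

theorem USigma.not (hR : USigma m R) : UPi m fun K _ v => ¬R K v :=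
  hR.congr fun _ _ _ _ => not_not.symm

theorem UPi.not (hR : UPi m R) : USigma m fun K _ v => ¬R K v := hR

theorem USigma.comp (hR : USigma m R) (hσ : IsUAssign σ) : USigma m fun K _ v => R K (σ K v) := by
  induction m generalizing R σ with
  | zero =>
    obtain ⟨Q, hQ, hRQ⟩ := hR
    exact ⟨_, hQ.comp hσ, fun K _ _ v => hRQ K _⟩
  | succ m ih =>
    obtain ⟨Q, hQ, hRQ⟩ := hR
    exact ⟨_, ih hQ (.cons (.var 0) (hσ.comp (.drop 1))), fun K _ _ v => hRQ K _⟩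

theorem UPi.comp (hR : UPi m R) (hσ : IsUAssign σ) : UPi m fun K _ v => R K (σ K v) :=
  USigma.comp hR hσ

theorem UPi.toSigma (hR : UPi m R) : USigma (m + 1) R :=
  ⟨_, hR.not.comp (.drop 1), fun _ _ _ _ =>
    ⟨fun h => ⟨0, not_not_intro h⟩, fun ⟨_, h⟩ => not_not.1 h⟩⟩

theorem USigma.toPi (hR : USigma m R) : UPi (m + 1) R := hR.not.toSigma

theorem USigma.succ (hR : USigma m R) : USigma (m + 1) R := by
  induction m generalizing R with
  | zero =>
    obtain ⟨Q, hQ, hRQ⟩ := hR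
    have hnot : UPi 0 Q := ⟨_, hQ.not, fun _ _ _ _ => Iff.rfl⟩
    exact hnot.toSigma.congr fun K _ _ v => (hRQ K v).symm
  | succ m ih => exact hR.imp fun Q hQ => ⟨ih hQ.1, hQ.2⟩

theorem USigma.mono (hmk : m ≤ k) (hR : USigma m R) : USigma k R :=
  Nat.le_induction hR (fun _ _ => USigma.succ) k hmk

theorem UPi.mono (hmk : m ≤ k) (hR : UPi m R) : UPi k R := USigma.mono hmk hR

theorem USigma.of_delta0 (hR : UDelta0 R) : USigma m R :=
  USigma.mono (Nat.zero_le m) ⟨R, hR, fun _ _ _ _ => Iff.rfl⟩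

theorem UPi.of_delta0 (hR : UDelta0 R) : UPi m R := USigma.of_delta0 hR.not

/-- The closure properties of the level Σ_m which are proved simultaneously by induction on `m`. -/
structure USigmaClosed (m : ℕ) : Prop where
  and {R S : UPred} : USigma m R → USigma m S → USigma m fun K _ v => R K v ∧ S K v
  or {R S : UPred} : USigma m R → USigma m S → USigma m fun K _ v => R K v ∨ S K v
  bex {t : UTerm} {B : ∀ (K : Type) [lang.Structure K], K → Stream' K → Prop} : IsUTerm t →
    USigma m (fun K _ v => B K v.head v.tail) → USigma m fun K _ v => ∃ x < t K v, B K x v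

theorem exists_lt_quadPair_iff {K : Type} [lang.Structure K] [Fact (PAm K)] {Q : K → K → Prop}
    {x y : K} :
    (∃ x' < quadPair x y + 1, ∃ y' < quadPair x y + 1, quadPair x y = quadPair x' y' ∧ Q x' y') ↔
      Q x y := by
  constructor
  · rintro ⟨x', -, y', -, hpair, hQ⟩
    obtain ⟨rfl, rfl⟩ := quadPair_inj hpair
    exact hQ
  · exact fun hQ => ⟨x, Order.lt_add_one_iff.2 (left_le_quadPair x y), y,
      Order.lt_add_one_iff.2 le_add_self, rfl, hQ⟩

-- The two quantifiers are contracted to one over `quadPair x y`; values which are not pairs are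
-- excluded by the first disjunct.
theorem USigmaClosed.exists_exists_not (hm : USigmaClosed m)
    {Q : ∀ (K : Type) [lang.Structure K], K → K → Stream' K → Prop}
    (hQ : USigma m fun K _ v => Q K v.head v.tail.head v.tail.tail) :
    USigma (m + 1) fun K _ v => ∃ x y, ¬Q K x y v := by
  have hpair : UDelta0 fun _ _ v => v.get 2 = quadPair (v.get 1) (v.get 0) :=
    .eq (.var 2) (.quadPair (.var 1) (.var 0))
  refine ⟨fun K _ v =>
      (¬∃ x < v.head + 1, ∃ y < v.head + 1, v.head = quadPair x y) ∨
        ∃ x < v.head + 1, ∃ y < v.head + 1, v.head = quadPair x y ∧ Q K x y v.tail,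
    hm.or (.of_delta0 (.not (.bex (.add (.var 0) .one) (.bex (.add (.var 1) .one) hpair))))
      (hm.bex (.add (.var 0) .one) (hm.bex (.add (.var 1) .one) (hm.and (.of_delta0 hpair)
        (hQ.comp (.cons (.var 1) (.cons (.var 0) (.drop 3))))))), fun K _ _ v => ?_⟩
  constructor
  · rintro ⟨x, y, hxy⟩
    refine ⟨quadPair x y, not_or_intro (not_not_intro ?_) ?_⟩
    · simpa using (exists_lt_quadPair_iff (Q := fun _ _ => True) (x := x) (y := y)).2 trivial
    · exact exists_lt_quadPair_iff.not.2 hxy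
  · rintro ⟨w, hw⟩
    obtain ⟨hdec, hall⟩ := not_or.1 hw
    obtain ⟨x, -, y, -, rfl⟩ := not_not.1 hdec
    exact ⟨x, y, exists_lt_quadPair_iff.not.1 hall⟩

theorem USigmaClosed.zero : USigmaClosed 0 where
  and := fun ⟨_, hQ, hR⟩ ⟨_, hQ', hS⟩ =>
    ⟨_, hQ.and hQ', fun K _ _ v => and_congr (hR K v) (hS K v)⟩
  or := fun ⟨_, hQ, hR⟩ ⟨_, hQ', hS⟩ =>
    ⟨_, hQ.or hQ', fun K _ _ v => or_congr (hR K v) (hS K v)⟩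
  bex := fun ht ⟨Q, hQ, hB⟩ =>
    ⟨_, .bex (B := fun K _ x v => Q K (x :: v)) ht (hQ.comp (.cons (.var 0) (.drop 1))),
      fun K _ _ v => exists_congr fun x => and_congr_right fun _ => hB K (x :: v)⟩

theorem USigmaClosed.succ (hm : USigmaClosed m) : USigmaClosed (m + 1) where
  and := fun ⟨Q, hQ, hR⟩ ⟨Q', hQ', hS⟩ => by
    refine (hm.exists_exists_not (Q := fun K _ x y v => Q K (x :: v) ∨ Q' K (y :: v))
      (hm.or (hQ.comp (.cons (.var 0) (.drop 2)))
        (hQ'.comp (.cons (.var 1) (.drop 2))))).congr fun K _ _ v => ?_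
    simp only [hR, hS, not_or, exists_and_left, exists_and_right]
  or := fun ⟨_, hQ, hR⟩ ⟨_, hQ', hS⟩ =>
    ⟨_, hm.and hQ hQ', fun K _ _ v => by simp only [hR, hS, ← exists_or, not_and_or]⟩
  bex := fun {t B} ht ⟨Q, hQ, hB⟩ => by
    refine (hm.exists_exists_not (Q := fun K _ x y v => ¬x < t K v ∨ Q K (y :: x :: v))
      (hm.or (.of_delta0 (.not (.lt (.var 0) (ht.comp (.drop 2)))))
        (hQ.comp (.cons (.var 1) (.cons (.var 0) (.drop 2)))))).congr fun K _ _ v => ?_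
    have hBx : ∀ x, B K x v ↔ ∃ y, ¬Q K (y :: x :: v) := fun x => hB K (x :: v)
    simp only [hBx, not_or, not_not, exists_and_left]

theorem uSigmaClosed (m : ℕ) : USigmaClosed m := by
  induction m with
  | zero => exact .zero
  | succ m ih => exact ih.succ

theorem USigma.and (hR : USigma m R) (hS : USigma m S) : USigma m fun K _ v => R K v ∧ S K v :=
  (uSigmaClosed m).and hR hS

theorem USigma.or (hR : USigma m R) (hS : USigma m S) : USigma m fun K _ v => R K v ∨ S K v :=
  (uSigmaClosed m).or hR hS

theorem USigma.imp (hR : UPi m R) (hS : USigma m S) : USigma m fun K _ v => R K v → S K v :=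
  (hR.not.or hS).congr fun _ _ _ _ => imp_iff_not_or.symm

theorem USigma.bex (ht : IsUTerm t) (hB : USigma m fun K _ v => B K v.head v.tail) :
    USigma m fun K _ v => ∃ x < t K v, B K x v :=
  (uSigmaClosed m).bex ht hB

theorem USigma.ex (hB : USigma (m + 1) fun K _ v => B K v.head v.tail) :
    USigma (m + 1) fun K _ v => ∃ x, B K x v := by
  obtain ⟨Q, hQ, hBQ⟩ := hB
  exact ((uSigmaClosed m).exists_exists_not (Q := fun K _ x y v => Q K (y :: x :: v))
    (hQ.comp (.cons (.var 1) (.cons (.var 0) (.drop 2))))).congr fun K _ _ v =>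
      exists_congr fun x => (hBQ K (x :: v)).symm

theorem UPi.and (hR : UPi m R) (hS : UPi m S) : UPi m fun K _ v => R K v ∧ S K v :=
  USigma.congr (USigma.or hR hS) fun _ _ _ _ => not_and_or.symm

theorem UPi.or (hR : UPi m R) (hS : UPi m S) : UPi m fun K _ v => R K v ∨ S K v :=
  USigma.congr (USigma.and hR hS) fun _ _ _ _ => not_or.symm

theorem UPi.imp (hR : USigma m R) (hS : UPi m S) : UPi m fun K _ v => R K v → S K v :=
  (hR.not.or hS).congr fun _ _ _ _ => imp_iff_not_or.symm

theorem UPi.ball (ht : IsUTerm t) (hB : UPi m fun K _ v => B K v.head v.tail) :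
    UPi m fun K _ v => ∀ x < t K v, B K x v :=
  USigma.congr (USigma.bex (B := fun K _ x v => ¬B K x v) ht hB) fun _ _ _ _ => by push Not; rfl

theorem UPi.all (hB : UPi (m + 1) fun K _ v => B K v.head v.tail) :
    UPi (m + 1) fun K _ v => ∀ x, B K x v :=
  USigma.congr (USigma.ex (B := fun K _ x v => ¬B K x v) hB) fun _ _ _ _ => by push Not; rfl

end UniformHierarchy

section FormulasToPredicates

/-- The first `n` entries of the assignment `v`, read as the values of the `n` bound variables of a
formula: the innermost quantifier is last in a formula, but first in an assignment. -/
def revTake {K : Type} (n : ℕ) (v : Stream' K) : Fin n → K := fun i => v.get i.rev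

theorem revTake_succ_cons {K : Type} (n : ℕ) (x : K) (v : Stream' K) :
    revTake (n + 1) (x :: v) = Fin.snoc (revTake n v) x := by
  funext i
  refine Fin.lastCases ?_ (fun j => ?_) i
  · simp only [revTake, Fin.rev_last, Fin.snoc_last]
    rfl
  · simp only [revTake, Fin.rev_castSucc, Fin.snoc_castSucc]
    rfl

/-- The uniform predicate expressed by the formula `φ`, whose free variables are numbered by `σ`. -/
def UPred.ofFormula {α : Type} {n : ℕ} (σ : α → ℕ) (φ : lang.BoundedFormula α n) : UPred :=
  fun _ _ v => φ.Realize (fun a => v.get (σ a + n)) (revTake n v)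

variable {α : Type} {m n : ℕ} (σ : α → ℕ)

theorem IsUTerm.of_term (t : lang.Term (α ⊕ Fin n)) :
    IsUTerm fun _ _ v => t.realize (Sum.elim (fun a => v.get (σ a + n)) (revTake n v)) := by
  refine ⟨t.relabel (Sum.elim (fun a => σ a + n) fun i => i.rev), fun K _ v => ?_⟩
  rw [Term.realize_relabel]
  exact congrArg t.realize (funext fun | .inl _ => rfl | .inr _ => rfl)

theorem IsDelta0.uDelta0 {φ : lang.BoundedFormula α n} (h : IsDelta0 n φ) :
    UDelta0 (.ofFormula σ φ) := by
  induction h with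
  | falsum _ => exact .falsum
  | equal n t u => exact .eq (.of_term σ t) (.of_term σ u)
  | rel _ l R ts =>
    cases R
    refine (UDelta0.lt (.of_term σ (ts 0)) (.of_term σ (ts 1))).congr fun K _ v => ?_
    have hts : ![ts 0, ts 1] = ts := funext (Fin.forall_fin_two.2 ⟨rfl, rfl⟩)
    rw [UPred.ofFormula, ← realize_ltFm, ltFm, hts]
  | imp n _ _ hφ hψ => exact hφ.imp hψ
  | @bdAll n t φ _ hφ =>
    refine (UDelta0.ball (B := fun K _ x v => UPred.ofFormula σ φ K (x :: v)) (.of_term σ t)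
      (hφ.congr fun K _ v => by rw [Stream'.eta])).congr fun K _ v => forall_congr' fun x => ?_
    rw [BoundedFormula.realize_imp, realize_ltFm, realize_liftAt_snoc, Term.realize_var,
      Sum.elim_inr, Fin.snoc_last, UPred.ofFormula, revTake_succ_cons]
    rfl

mutual

theorem SigmaFm.uSigma : ∀ {m n : ℕ} {φ : lang.BoundedFormula α n}, SigmaFm m n φ →
    USigma m (.ofFormula σ φ)
  | _, _, _, .delta0 _ _ h => .of_delta0 (h.uDelta0 σ)
  | _, _, _, .ofPi _ _ h => (h.uPi).toSigma
  | _, _, _, @SigmaFm.ex _ _ n φ h =>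
    (USigma.ex (B := fun K _ x v => UPred.ofFormula σ φ K (x :: v))
      (h.uSigma.congr fun K _ _ v => by rw [Stream'.eta])).congr
      fun K _ _ v => by
        simp only [UPred.ofFormula, BoundedFormula.realize_ex, revTake_succ_cons]
        rfl

theorem PiFm.uPi : ∀ {m n : ℕ} {φ : lang.BoundedFormula α n}, PiFm m n φ → UPi m (.ofFormula σ φ)
  | _, _, _, .delta0 _ _ h => .of_delta0 (h.uDelta0 σ)
  | _, _, _, .ofSigma _ _ h => (h.uSigma).toPi
  | _, _, _, @PiFm.all _ _ n φ h =>
    (UPi.all (B := fun K _ x v => UPred.ofFormula σ φ K (x :: v))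
      (h.uPi.congr fun K _ _ v => by rw [Stream'.eta])).congr
      fun K _ _ v => by
        simp only [UPred.ofFormula, BoundedFormula.realize_all, revTake_succ_cons]
        rfl

end

end FormulasToPredicates

section PredicatesToFormulas

variable {α : Type} {m n p : ℕ} {R : UPred}

/-- The formula `φ` defines in all models of PA⁻ the uniform predicate `R` with the terms `σ`
substituted for its variables. -/
def DefinesSubst (σ : Stream' (lang.Term (α ⊕ Fin n))) (R : UPred)
    (φ : lang.BoundedFormula α n) : Prop :=
  ∀ (K : Type) [lang.Structure K] [Fact (PAm K)] (v : α → K) (xs : Fin n → K),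
    φ.Realize v xs ↔ R K (σ.map fun τ => τ.realize (Sum.elim v xs))

theorem USigma.exists_definesSubst (hR : USigma m R) (σ : Stream' (lang.Term (α ⊕ Fin n))) :
    (∃ φ, SigmaFm m n φ ∧ DefinesSubst σ R φ) ∧
      ∃ φ, PiFm m n φ ∧ DefinesSubst σ (fun K _ v => ¬R K v) φ := by
  induction m generalizing R n with
  | zero =>
    obtain ⟨Q, hQ, hRQ⟩ := hR
    obtain ⟨φ, hφ, hφQ⟩ := hQ α n σ
    obtain ⟨ψ, hψ, hψQ⟩ := hQ.not α n σ
    exact ⟨⟨φ, .delta0 0 n hφ, fun K _ _ v xs => (hφQ K v xs).trans (hRQ K _).symm⟩,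
      ψ, .delta0 0 n hψ, fun K _ _ v xs => (hψQ K v xs).trans (not_congr (hRQ K _).symm)⟩
  | succ m ih =>
    obtain ⟨Q, hQ, hRQ⟩ := hR
    obtain ⟨⟨φ, hφ, hφQ⟩, ψ, hψ, hψQ⟩ := ih hQ (liftSubst σ)
    refine ⟨⟨ψ.ex, .ex m n (.ofPi m _ hψ), fun K _ _ v xs => ?_⟩,
      φ.all, .all m n (.ofSigma m _ hφ), fun K _ _ v xs => ?_⟩
    · simp only [BoundedFormula.realize_ex, hψQ K, map_realize_liftSubst, hRQ]
    · simp only [BoundedFormula.realize_all, hφQ K, map_realize_liftSubst, hRQ, not_exists, not_not]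

theorem exists_formula_support (φ : lang.BoundedFormula ℕ 0) :
    ∃ p, ∀ (K : Type) [lang.Structure K] (v w : Stream' K), (∀ i < p, v.get i = w.get i) →
      (φ.Realize v.get finZeroElim ↔ φ.Realize w.get finZeroElim) := by
  obtain ⟨p, hp⟩ := φ.freeVarFinset.exists_nat_subset_range
  refine ⟨p, fun K _ v w hvw => ?_⟩
  rw [← BoundedFormula.realize_restrictFreeVar (f := id) (v := fun i => v.get i) v.get fun _ => rfl,
    ← BoundedFormula.realize_restrictFreeVar (f := id) (v := fun i => w.get i) w.get fun _ => rfl]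
  exact iff_of_eq (congrArg (fun x => BoundedFormula.Realize _ x _)
    (funext fun i : φ.freeVarFinset => hvw i (Finset.mem_range.1 (hp i.2))))

theorem UDelta0.exists_support (hR : UDelta0 R) :
    ∃ p, ∀ (K : Type) [lang.Structure K] (v w : Stream' K), (∀ i < p, v.get i = w.get i) →
      (R K v ↔ R K w) := by
  obtain ⟨φ, -, hφ⟩ := hR ℕ 0 (Stream'.nats.map fun i => Term.var (Sum.inl i))
  obtain ⟨p, hp⟩ := exists_formula_support φ
  exact ⟨p, fun K _ v w hvw =>
    (hφ K v.get finZeroElim).symm.trans ((hp K v w hvw).trans (hφ K w.get finZeroElim))⟩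

theorem USigma.exists_support (hR : USigma m R) :
    ∃ p, ∀ (K : Type) [lang.Structure K] [Fact (PAm K)] (v w : Stream' K),
      (∀ i < p, v.get i = w.get i) → (R K v ↔ R K w) := by
  obtain ⟨⟨φ, -, hφ⟩, -⟩ :=
    hR.exists_definesSubst (Stream'.nats.map fun i => Term.var (Sum.inl i : ℕ ⊕ Fin 0))
  obtain ⟨p, hp⟩ := exists_formula_support φ
  exact ⟨p, fun K _ _ v w hvw =>
    (hφ K v.get finZeroElim).symm.trans ((hp K v w hvw).trans (hφ K w.get finZeroElim))⟩

/-- A stream of variables running through all of `Fin (p + 1)`, with the first `p` variables in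
their places. -/
def finVars (p : ℕ) : Stream' (Fin (p + 1)) := Stream'.nats.map (Fin.ofNat (p + 1))

theorem get_map_finVars {K : Type} (v : Stream' K) {i : ℕ} (hi : i < p) :
    ((finVars p).map fun j : Fin (p + 1) => v.get j).get i = v.get i :=
  congrArg v.get (Nat.mod_eq_of_lt (Nat.lt_succ_of_lt hi))

theorem USigma.exists_formula (hR : USigma m R) (a : Stream' α) :
    ∃ φ : lang.BoundedFormula α 0, SigmaFm m 0 φ ∧
      ∀ (K : Type) [lang.Structure K] [Fact (PAm K)] (v : α → K),
        φ.Realize v finZeroElim ↔ R K (a.map v) := by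
  obtain ⟨⟨φ, hφ, hφR⟩, -⟩ := hR.exists_definesSubst (a.map fun i => Term.var (Sum.inl i))
  exact ⟨φ, hφ, fun K _ _ v => hφR K v finZeroElim⟩

theorem isSigmaDef_iff {M : Type} [lang.Structure M] [Fact (PAm M)] {k : ℕ}
    {A : (Fin k → M) → Prop} :
    IsSigmaDef m M A ↔
      ∃ (R : UPred) (w : Stream' M), USigma m R ∧ ∀ v, A v ↔ R M (List.ofFn v ++ₛ w) := by
  constructor
  · rintro ⟨p, φ, w, hφ, hA⟩
    refine ⟨_, List.ofFn w ++ₛ .const 0,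
      SigmaFm.uSigma (Sum.elim (fun i : Fin k => i) fun j : Fin p => k + j) hφ, fun v => ?_⟩
    rw [hA, UPred.ofFormula, Subsingleton.elim finZeroElim (revTake 0 _)]
    refine iff_of_eq (congrArg (fun x => φ.Realize x _) ?_)
    ext (i | i)
    · simp [Stream'.get_append_left]
    · have h := Stream'.get_append_right i (List.ofFn v) (List.ofFn w ++ₛ .const 0)
      simp_all [Stream'.get_append_left]
  · rintro ⟨R, w, hR, hA⟩
    obtain ⟨p, hp⟩ := hR.exists_support
    obtain ⟨φ, hφ, hφR⟩ := hR.exists_formula (List.ofFn Sum.inl ++ₛ (finVars p).map Sum.inr)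
    refine ⟨p + 1, φ, fun j => w.get j, hφ, fun v => ?_⟩
    rw [hA, hφR, Stream'.map_append_stream, List.map_ofFn, Stream'.map_map, Sum.elim_comp_inl,
      Sum.elim_comp_inr]
    refine hp M _ _ fun i hi => ?_
    obtain hik | ⟨j, rfl⟩ := (lt_or_ge i k).imp_right Nat.exists_eq_add_of_le
    · simp [Stream'.get_append_left, hik]
    · have h := Stream'.get_append_right j (List.ofFn v)
      simp only [List.length_ofFn] at h
      rw [h, h, get_map_finVars w (Nat.lt_of_add_left_lt hi)]

theorem sigmaDef1_iff {M : Type} [lang.Structure M] [Fact (PAm M)] {A : Set M} :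
    SigmaDef1 m M A ↔ ∃ (R : UPred) (w : Stream' M), USigma m R ∧ ∀ x, x ∈ A ↔ R M (x :: w) := by
  rw [SigmaDef1, isSigmaDef_iff]
  exact exists₂_congr fun R w => and_congr_right fun _ =>
    ⟨fun h x => h ![x], fun h v => (h (v 0)).trans (by simp [Stream'.cons_append_stream])⟩

theorem sigmaDef2_iff {M : Type} [lang.Structure M] [Fact (PAm M)] {A : M → M → Prop} :
    SigmaDef2 m M A ↔
      ∃ (R : UPred) (w : Stream' M), USigma m R ∧ ∀ x y, A x y ↔ R M (x :: y :: w) := by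
  rw [SigmaDef2, isSigmaDef_iff]
  exact exists₂_congr fun R w => and_congr_right fun _ =>
    ⟨fun h x y => h ![x, y],
      fun h v => (h (v 0) (v 1)).trans (by simp [Stream'.cons_append_stream])⟩

end PredicatesToFormulas

section Transfer

variable {M N : Type} [lang.Structure M] [lang.Structure N] {g : M → N} {m : ℕ} {R : UPred}

theorem USigma.transfer [Fact (PAm M)] [Fact (PAm N)] (hg : SigmaElem M N m g) (hR : USigma m R)
    (v : Stream' M) : R M v ↔ R N (v.map g) := by
  obtain ⟨p, hp⟩ := hR.exists_support
  obtain ⟨φ, hφ, hφR⟩ := hR.exists_formula (finVars p)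
  calc R M v ↔ R M ((finVars p).map fun j : Fin (p + 1) => v.get j) :=
        hp M _ _ fun i hi => (get_map_finVars v hi).symm
    _ ↔ R N ((finVars p).map fun j : Fin (p + 1) => (v.map g).get j) := by
        rw [← hφR, hg (p + 1) φ hφ, hφR]
        rfl
    _ ↔ R N (v.map g) := hp N _ _ fun i hi => get_map_finVars _ hi

theorem UPi.transfer [Fact (PAm M)] [Fact (PAm N)] (hg : SigmaElem M N m g) (hR : UPi m R)
    (v : Stream' M) : R M v ↔ R N (v.map g) :=
  not_iff_not.1 (USigma.transfer hg hR v)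

theorem SigmaFm.exs {α : Type} {n : ℕ} {φ : lang.BoundedFormula α n} (h : SigmaFm (m + 1) n φ) :
    SigmaFm (m + 1) 0 φ.exs := by
  induction n with
  | zero => exact h
  | succ n ih => exact ih (h.ex m n)

theorem UDelta0.transfer_forall (hg : SigmaElem M N (m + 1) g) (hR : UDelta0 R)
    (hM : ∀ v, R M v) (v : Stream' N) : R N v := by
  obtain ⟨p, hp⟩ := hR.exists_support
  obtain ⟨φ, hφ, hφR⟩ := hR.not (Fin 0) (p + 1) ((finVars p).map fun j => Term.var (Sum.inr j))
  have hex : ∀ {K : Type} [lang.Structure K] (x : Fin 0 → K),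
      BoundedFormula.Realize φ.exs x finZeroElim ↔
        ∃ xs : Fin (p + 1) → K, ¬R K ((finVars p).map xs) := fun x => by
    rw [Subsingleton.elim finZeroElim default]
    exact BoundedFormula.realize_exs.trans (exists_congr fun xs => hφR _ x xs)
  have hnot : ¬BoundedFormula.Realize φ.exs (g ∘ finZeroElim) finZeroElim := by
    rw [← hg 0 _ (SigmaFm.exs (.delta0 _ _ hφ)), hex]
    exact fun ⟨xs, hxs⟩ => hxs (hM _)
  rw [hex, not_exists] at hnot
  exact (hp N _ _ fun i hi => get_map_finVars v hi).1 (not_not.1 (hnot fun j => v.get j))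

theorem PAm.of_sigmaElem (h : PAm M) (hg : SigmaElem M N (m + 1) g) : PAm N := by
  have : Fact (PAm M) := ⟨h⟩
  have transfer {R : UPred} (hR : UDelta0 R) (hM : ∀ v, R M v) (x y z : N) :
      R N (x :: y :: z :: .const 0) := hR.transfer_forall hg hM _
  have x := IsUTerm.var 0
  have y := IsUTerm.var 1
  have z := IsUTerm.var 2
  exact {
    add_assoc := transfer (.eq (.add (.add x y) z) (.add x (.add y z))) fun _ => h.add_assoc _ _ _
    add_comm := fun a b => transfer (.eq (.add x y) (.add y x)) (fun _ => h.add_comm _ _) a b 0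
    mul_assoc := transfer (.eq (.mul (.mul x y) z) (.mul x (.mul y z))) fun _ => h.mul_assoc _ _ _
    mul_comm := fun a b => transfer (.eq (.mul x y) (.mul y x)) (fun _ => h.mul_comm _ _) a b 0
    ldistrib := transfer (.eq (.mul x (.add y z)) (.add (.mul x y) (.mul x z)))
      fun _ => h.ldistrib _ _ _
    add_zero := fun a => transfer (.eq (.add x .zero) x) (fun _ => h.add_zero _) a 0 0
    mul_zero := fun a => transfer (.eq (.mul x .zero) .zero) (fun _ => h.mul_zero _) a 0 0
    mul_one := fun a => transfer (.eq (.mul x .one) x) (fun _ => h.mul_one _) a 0 0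
    lt_trans := transfer (.imp (.lt x y) (.imp (.lt y z) (.lt x z))) fun _ => h.lt_trans _ _ _
    lt_irrefl := fun a => transfer (.not (.lt x x)) (fun _ => h.lt_irrefl _) a 0 0
    lt_total := fun a b => transfer (.or (.lt x y) (.or (.eq x y) (.lt y x)))
      (fun _ => h.lt_total _ _) a b 0
    add_lt_add := transfer (.imp (.lt x y) (.lt (.add x z) (.add y z)))
      fun _ => h.add_lt_add _ _ _
    mul_lt_mul := transfer (.imp (.lt x y) (.imp (.lt .zero z) (.lt (.mul x z) (.mul y z))))
      fun _ => h.mul_lt_mul _ _ _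
    sub_exists := fun a b hab => by
      obtain ⟨d, -, hd⟩ := transfer (.imp (.lt x y) (.bex (.add y .one) (B := fun _ _ d v =>
          v.get 0 + d = v.get 1) (.eq (.add y x) z))) (fun v hv => by
        obtain ⟨d, hd⟩ := h.sub_exists _ _ hv
        exact ⟨d, Order.lt_add_one_iff.2 (hd ▸ le_add_self), hd⟩) a b 0 hab
      exact ⟨d, hd⟩
    zero_lt_one := transfer (.lt .zero .one) (fun _ => h.zero_lt_one) 0 0 0
    discrete := fun a => transfer (.imp (.lt .zero x) (.le .one x)) (fun _ => h.discrete _) a 0 0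
    zero_le := fun a => transfer (.le .zero x) (fun _ => h.zero_le _) a 0 0 }

end Transfer

section Codes

variable {K : Type} [lang.Structure K] {s t u : UTerm}

/-- Divisibility, with the quotient bounded so as to be Δ₀. -/
def BddDvd (x y : K) : Prop := ∃ q < y + 1, y = q * x

theorem bddDvd_iff_dvd [Fact (PAm K)] {x y : K} : BddDvd x y ↔ x ∣ y := by
  refine ⟨fun ⟨q, _, hq⟩ => ⟨q, hq.trans (mul_comm q x)⟩, ?_⟩
  rintro ⟨q, rfl⟩
  rcases eq_zero_or_pos x with rfl | hx
  · exact ⟨0, Order.lt_add_one_iff.2 zero_le, by simp⟩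
  · exact ⟨q, Order.lt_add_one_iff.2 (le_mul_of_one_le_left zero_le (Order.one_le_iff_pos.2 hx)),
      mul_comm x q⟩

theorem UDelta0.bddDvd (hs : IsUTerm s) (ht : IsUTerm t) :
    UDelta0 fun K _ v => BddDvd (s K v) (t K v) :=
  .bex (.add ht .one) (.eq (ht.comp (.drop 1)) (.mul (.var 0) (hs.comp (.drop 1))))

/-- Membership in the set coded by the pair `e, r`: the set of all indices whose β-modulus does not
divide `r`. -/
def CodeMem (e r i : K) : Prop := ¬BddDvd (betaModulus e i) r

theorem UDelta0.codeMem (hs : IsUTerm s) (ht : IsUTerm t) (hu : IsUTerm u) :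
    UDelta0 fun K _ v => CodeMem (s K v) (t K v) (u K v) :=
  .not (.bddDvd (.betaModulus hs hu) ht)

/-- The coded relation contains a pair `(w, y)` with `y < B`. -/
def HasCodedWitness (B e r w : K) : Prop := ∃ y < B, CodeMem e r (quadPair w y)

theorem UDelta0.hasCodedWitness {B : UTerm} (hB : IsUTerm B) (hs : IsUTerm s) (ht : IsUTerm t)
    (hu : IsUTerm u) : UDelta0 fun K _ v => HasCodedWitness (B K v) (s K v) (t K v) (u K v) :=
  .bex hB (.codeMem (hs.comp (.drop 1)) (ht.comp (.drop 1))
    (.quadPair (hu.comp (.drop 1)) (.var 0)))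

end Codes

section SoundCodes

variable {k : ℕ} {P : UPred}

/-- All pairs `(w, y)` with `w < b` and `y < B` in the coded relation satisfy `P`. -/
def SoundCode (P : UPred) (K : Type) [lang.Structure K] (B e r b : K) (v : Stream' K) : Prop :=
  ∀ w < b, ∀ y < B, CodeMem e r (quadPair w y) → P K (y :: w :: v)

theorem UPi.soundCode (hP : UPi k P) :
    UPi k fun K _ v => SoundCode P K (v.get 0) (v.get 1) (v.get 2) (v.get 3) (v.drop 4) :=
  .ball (.var 3) (.ball (.var 1) (.imp
    (.of_delta0 (.codeMem (.var 3) (.var 4) (.quadPair (.var 1) (.var 0))))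
    (hP.comp (.cons (.var 0) (.cons (.var 1) (.drop 6))))))

/-- Some coded subrelation of `P` is total below `b`. For `P` in Π_k this is a Σ_{k+1} rendering of
the existence of a common bound on `P`-witnesses for all `w < b`, so Σ_{k+1} induction applies. -/
def CodedTotal (P : UPred) (K : Type) [lang.Structure K] (b : K) (v : Stream' K) : Prop :=
  ∃ r e B, (∀ w < b, HasCodedWitness B e r w) ∧ SoundCode P K B e r b v

theorem UPi.codedTotal (hP : UPi k P) :
    USigma (k + 1) fun K _ v => CodedTotal P K v.head v.tail :=
  .ex (.ex (.ex (UPi.toSigma (.and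
    (.of_delta0 (.ball (.var 3) (.hasCodedWitness (.var 1) (.var 2) (.var 3) (.var 0))))
    hP.soundCode))))

/-- Some `y` satisfies `P` with `w`, that is, `w` is in the projection of the relation `P`. -/
def HasWitness (P : UPred) (K : Type) [lang.Structure K] (w : K) (v : Stream' K) : Prop :=
  ∃ y, P K (y :: w :: v)

theorem UPi.not_hasWitness (hP : UPi k P) :
    UPi (k + 1) fun K _ v => ¬HasWitness P K v.head v.tail :=
  USigma.not (.ex (B := fun K _ y v => P K (y :: v.head :: v.tail))
    (hP.toSigma.comp (.cons (.var 0) (.cons (.var 1) (.drop 2)))))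

/-- The coded relation is a subrelation of `P` with the same domain below `b`. -/
def CodesDomain (P : UPred) (K : Type) [lang.Structure K] (B e r b : K) (v : Stream' K) : Prop :=
  (∀ w < b, ∀ y, P K (y :: w :: v) → HasCodedWitness B e r w) ∧ SoundCode P K B e r b v

theorem UPi.codesDomain (hP : UPi k P) : UPi (k + 1) fun K _ v =>
    CodesDomain P K (v.get 0) (v.get 1) (v.get 2) (v.get 3) (v.drop 4) :=
  .and (.ball (.var 3) (.all (.imp
    (hP.comp (.cons (.var 0) (.cons (.var 1) (.drop 6)))).toSigma
    (.of_delta0 (.hasCodedWitness (.var 2) (.var 3) (.var 4) (.var 1))))))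
    (hP.soundCode.mono k.le_succ)

theorem CodesDomain.hasCodedWitness_iff {K : Type} [lang.Structure K] {B e r b w : K}
    {v : Stream' K} (h : CodesDomain P K B e r b v) (hw : w < b) :
    HasCodedWitness B e r w ↔ HasWitness P K w v :=
  ⟨fun ⟨y, hy, hmem⟩ => ⟨y, h.2 w hw y hy hmem⟩, fun ⟨y, hy⟩ => h.1 w hw y hy⟩

end SoundCodes

section Fragments

variable {M : Type} [lang.Structure M] [Fact (PAm M)] {n k : ℕ} {P R : UPred}

theorem ISig.induction (hI : ISig n M) (hR : USigma n R) (v : Stream' M) (zero : R M (0 :: v))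
    (succ : ∀ x, R M (x :: v) → R M ((x + 1) :: v)) (x : M) : R M (x :: v) :=
  hI {x | R M (x :: v)} (sigmaDef1_iff.2 ⟨R, v, hR, fun _ => Iff.rfl⟩) zero succ x

theorem ISig.exists_common_multiple (hI : ISig n M) (hn : 1 ≤ n) {t : UTerm} (ht : IsUTerm t)
    (v : Stream' M) (hpos : ∀ j, 0 < t M (j :: v)) (b : M) :
    ∃ r, 0 < r ∧ ∀ j < b, t M (j :: v) ∣ r := by
  have hdef : USigma 1 fun K _ w => ∃ r, 0 < r ∧ ∀ j < w.head, BddDvd (t K (j :: w.tail)) r :=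
    .ex (.of_delta0 (.and (.lt .zero (.var 0)) (.ball (.var 1)
      (.bddDvd (ht.comp (.cons (.var 0) (.drop 3))) (.var 1)))))
  have key := hI.induction (hdef.mono hn) v ⟨1, one_pos, fun j hj => absurd hj not_lt_zero⟩
    (fun x ⟨r, hr, hdvd⟩ => ⟨r * t M (x :: v), mul_pos hr (hpos x), fun j hj => ?_⟩) b
  · simpa only [bddDvd_iff_dvd, Stream'.head_cons, Stream'.tail_cons] using key
  · rw [bddDvd_iff_dvd]
    obtain hlt | rfl := (Order.lt_add_one_iff.1 hj).lt_or_eq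
    · exact (bddDvd_iff_dvd.1 (hdvd j hlt)).mul_right _
    · exact dvd_mul_left _ _

/-- The least number principle for Π_k predicates. -/
def LeastNumber (k : ℕ) (M : Type) [lang.Structure M] : Prop :=
  ∀ R : UPred, UPi k R → ∀ (v : Stream' M) (x : M), R M (x :: v) →
    ∃ x₀, R M (x₀ :: v) ∧ ∀ y < x₀, ¬R M (y :: v)

-- The code is the least positive common multiple of the moduli of the indices outside `R`: were it
-- divisible by the modulus of an index in `R`, the quotient would be a smaller one.
theorem LeastNumber.exists_code (hL : LeastNumber k M) (hI : ISig n M) (hn : 1 ≤ n)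
    (hR : UPi k R) (v : Stream' M) (b : M) :
    ∃ e r : M, ∀ w < b, R M (w :: v) ↔ CodeMem e r w := by
  obtain ⟨e, he, hde⟩ := hI.exists_common_multiple hn (.add (.var 0) .one) v
    (fun j => zero_lt_one.trans_le le_add_self) b
  have hde' : ∀ d, 0 < d → d ≤ b → d ∣ e := by
    intro d hd hdb
    obtain ⟨j, rfl⟩ := exists_add_of_le (Order.one_le_iff_pos.2 hd)
    rw [add_comm] at hdb ⊢
    exact hde j (Order.add_one_le_iff.1 hdb)
  obtain ⟨r₀, hr₀, hdr₀⟩ := hI.exists_common_multiple hn (.betaModulus (.var 1) (.var 0)) (e :: v)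
    (fun j => betaModulus_pos e j) b
  have hdef : UPi k fun K _ v => 0 < v.get 0 ∧ ∀ w < v.get 2,
      R K (w :: v.drop 3) ∨ BddDvd (betaModulus (v.get 1) w) (v.get 0) :=
    .and (.of_delta0 (.lt .zero (.var 0))) (.ball (.var 2) (.or
      (hR.comp (.cons (.var 0) (.drop 4)))
      (.of_delta0 (.bddDvd (.betaModulus (.var 2) (.var 0)) (.var 1)))))
  obtain ⟨r, ⟨hr, hdr⟩, hmin⟩ := hL _ hdef (e :: b :: v) r₀
    ⟨hr₀, fun w hw => .inr (bddDvd_iff_dvd.2 (hdr₀ w hw))⟩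
  refine ⟨e, r, fun w hw => ⟨fun hRw hdvd => ?_, fun hmem => (hdr w hw).resolve_right hmem⟩⟩
  obtain ⟨q, rfl⟩ := bddDvd_iff_dvd.1 hdvd
  have hq : 0 < q := pos_of_mul_pos_right hr zero_le
  refine hmin q (lt_mul_of_one_lt_left hq (one_lt_betaModulus he w)) ⟨hq, fun w' hw' => ?_⟩
  obtain rfl | hne := eq_or_ne w' w
  · exact .inl hRw
  · exact (hdr w' hw').imp_right fun hdvd' => bddDvd_iff_dvd.2
      (betaModulus_dvd_of_dvd_mul hde' hw' hw hne (bddDvd_iff_dvd.1 hdvd'))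

theorem LeastNumber.exists_pair_code (hL : LeastNumber k M) (hI : ISig n M) (hn : 1 ≤ n)
    (hP : UPi k P) (v : Stream' M) (b B : M) :
    ∃ e r : M, ∀ w < b, ∀ y < B, P M (y :: w :: v) ↔ CodeMem e r (quadPair w y) := by
  have hdef : UPi k fun K _ v => ∀ w < v.head + 1, ∀ y < v.head + 1,
      v.head = quadPair w y → P K (y :: w :: v.tail) :=
    .ball (.add (.var 0) .one) (.ball (.add (.var 1) .one) (.imp
      (.of_delta0 (.eq (.var 2) (.quadPair (.var 1) (.var 0))))
      (hP.comp (.cons (.var 0) (.cons (.var 1) (.drop 3))))))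
  obtain ⟨e, r, hcode⟩ := hL.exists_code hI hn hdef v (quadPair b B)
  refine ⟨e, r, fun w hw y hy => Iff.trans ⟨fun hPy w' _ y' _ hpair => ?_, fun hall => ?_⟩
    (hcode _ (quadPair_lt_quadPair (add_lt_add hw hy)))⟩
  · obtain ⟨rfl, rfl⟩ := quadPair_inj hpair
    exact hPy
  · exact hall w (Order.lt_add_one_iff.2 (left_le_quadPair w y)) y
      (Order.lt_add_one_iff.2 le_add_self) rfl

theorem LeastNumber.codedTotal_iff (hL : LeastNumber k M) (hI : ISig n M) (hn : 1 ≤ n)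
    (hP : UPi k P) (v : Stream' M) (b : M) :
    CodedTotal P M b v ↔ ∃ B, ∀ w < b, ∃ y < B, P M (y :: w :: v) := by
  constructor
  · rintro ⟨r, e, B, hwit, hsound⟩
    exact ⟨B, fun w hw => (hwit w hw).imp fun y hy => ⟨hy.1, hsound w hw y hy.1 hy.2⟩⟩
  · rintro ⟨B, hB⟩
    obtain ⟨e, r, hcode⟩ := hL.exists_pair_code hI hn hP v b B
    exact ⟨r, e, B, fun w hw => (hB w hw).imp fun y hy => ⟨hy.1, (hcode w hw y hy.1).1 hy.2⟩,
      fun w hw y hy => (hcode w hw y hy).2⟩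

theorem LeastNumber.collection (hL : LeastNumber k M) (hI : ISig n M) (hkn : k + 1 ≤ n)
    (hP : UPi k P) (v : Stream' M) (b : M) (h : ∀ w < b, ∃ y, P M (y :: w :: v)) :
    ∃ B, ∀ w < b, ∃ y < B, P M (y :: w :: v) := by
  have hiff := hL.codedTotal_iff hI (by omega) hP v
  have hdef : USigma (k + 1) fun K _ v => v.get 0 ≤ v.get 1 → CodedTotal P K v.head (v.drop 2) :=
    .imp (.of_delta0 (.le (.var 0) (.var 1))) (hP.codedTotal.comp (.cons (.var 0) (.drop 2)))
  have key : ∀ x, x ≤ b → CodedTotal P M x v := by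
    refine hI.induction (hdef.mono hkn) (b :: v)
      (fun _ => (hiff 0).2 ⟨0, fun w hw => absurd hw not_lt_zero⟩) fun x ih hx => ?_
    have hxb : x < b := (lt_add_one x).trans_le hx
    obtain ⟨B, hB⟩ := (hiff x).1 (ih hxb.le)
    obtain ⟨y, hy⟩ := h x hxb
    refine (hiff (x + 1)).2 ⟨max B (y + 1), fun w hw => ?_⟩
    obtain hlt | rfl := (Order.lt_add_one_iff.1 hw).lt_or_eq
    · exact (hB w hlt).imp fun y' hy' => hy'.imp_left (lt_max_of_lt_left ·)
    · exact ⟨y, lt_max_of_lt_right (lt_add_one y), hy⟩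
  exact (hiff b).1 (key b le_rfl)

theorem ISig.leastNumber_zero (hI : ISig n M) : LeastNumber 0 M := by
  rintro R ⟨Q, hQ, hRQ⟩ v x hx
  by_contra! hno
  have hdef : UDelta0 fun K _ v => ∀ w < v.head, Q K (w :: v.tail) :=
    .ball (.var 0) (hQ.comp (.cons (.var 0) (.drop 2)))
  have key := hI.induction (.of_delta0 hdef) v (fun w hw => absurd hw not_lt_zero) ?_ (x + 1)
  · exact (hRQ M (x :: v)).2 (key x (lt_add_one x)) hx
  · intro u ih w hw
    obtain hlt | rfl := (Order.lt_add_one_iff.1 hw).lt_or_eq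
    · exact ih w hlt
    · refine (hRQ M (w :: v)).1 fun hw => ?_
      obtain ⟨y, hy, hRy⟩ := hno w hw
      exact (hRQ M (y :: v)).2 (ih y hy) hRy

theorem LeastNumber.succ (hL : LeastNumber k M) (hI : ISig n M) (hkn : k + 1 ≤ n) :
    LeastNumber (k + 1) M := by
  rintro R ⟨Q, hQ, hRQ⟩ v x hx
  by_contra! hno
  have hiff := hL.codedTotal_iff hI (by omega) hQ.not v
  have key := hI.induction (hQ.not.codedTotal.mono hkn) v
    ((hiff 0).2 ⟨0, fun w hw => absurd hw not_lt_zero⟩) ?_ (x + 1)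
  · obtain ⟨B, hB⟩ := (hiff (x + 1)).1 key
    obtain ⟨y, -, hy⟩ := hB x (lt_add_one x)
    exact (hRQ M (x :: v)).2 ⟨y, hy⟩ hx
  · intro u ih
    obtain ⟨B, hB⟩ := (hiff u).1 ih
    have hlow : ∀ w < u, ¬R M (w :: v) := fun w hw =>
      (hRQ M (w :: v)).2 ((hB w hw).imp fun _ => And.right)
    refine (hiff (u + 1)).2 (hL.collection hI hkn hQ.not v (u + 1) fun w hw => ?_)
    refine (hRQ M (w :: v)).1 fun hRw => ?_
    obtain ⟨z, hz, hRz⟩ := hno w hRw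
    exact hlow z (hz.trans_le (Order.lt_add_one_iff.1 hw)) hRz

theorem ISig.leastNumber (hI : ISig n M) (hkn : k ≤ n) : LeastNumber k M := by
  induction k with
  | zero => exact hI.leastNumber_zero
  | succ k ih => exact (ih (by omega)).succ hI hkn

theorem ISig.exists_codesDomain (hI : ISig (k + 1) M) (hP : UPi k P) (v : Stream' M) (b : M) :
    ∃ B e r, CodesDomain P M B e r b v := by
  have hn : 1 ≤ k + 1 := by omega
  have hL : LeastNumber k M := hI.leastNumber k.le_succ
  obtain ⟨e₀, r₀, hcode₀⟩ :=
    (hI.leastNumber le_rfl).exists_code hI hn hP.not_hasWitness v b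
  have hdef : UPi k fun K _ v => CodeMem (v.get 2) (v.get 3) (v.get 1) ∨
      P K (v.get 0 :: v.get 1 :: v.drop 4) :=
    .or (.of_delta0 (.codeMem (.var 2) (.var 3) (.var 1)))
      (hP.comp (.cons (.var 0) (.cons (.var 1) (.drop 4))))
  obtain ⟨B, hB⟩ := hL.collection hI le_rfl hdef (e₀ :: r₀ :: v) b fun w hw => by
    by_cases hwit : HasWitness P M w v
    · exact hwit.imp fun _ => .inr
    · exact ⟨0, .inl ((hcode₀ w hw).1 hwit)⟩
  obtain ⟨e, r, hcode⟩ := hL.exists_pair_code hI hn hP v b B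
  refine ⟨B, e, r, fun w hw y hy => ?_, fun w hw y hy => (hcode w hw y hy).2⟩
  obtain ⟨y', hy', hmem | hP'⟩ := hB w hw
  · exact absurd ⟨y, hy⟩ ((hcode₀ w hw).2 hmem)
  · exact ⟨y', hy', (hcode w hw y' hy').1 hP'⟩

end Fragments

section BoundedSeqAt

variable {K : Type} [lang.Structure K]

theorem IsUTerm.cantorDouble {s t : UTerm} (hs : IsUTerm s) (ht : IsUTerm t) :
    IsUTerm fun K _ v => cantorDouble (s K v) (t K v) :=
  .add (.mul (.add hs ht) (.add (.add hs ht) .one)) (.add ht ht)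

/-- The relation `SeqAt s i x` with its quantifiers bounded. -/
def BddSeqAt (s i x : K) : Prop :=
  ∃ a < s + 1, ∃ b < s + 1, s + s = cantorDouble a b ∧ x < betaModulus b i ∧
    ∃ q < a + 1, a = q * betaModulus b i + x

theorem UDelta0.bddSeqAt {s i x : UTerm} (hs : IsUTerm s) (hi : IsUTerm i) (hx : IsUTerm x) :
    UDelta0 fun K _ v => BddSeqAt (s K v) (i K v) (x K v) :=
  .bex (.add hs .one) (.bex (.add (hs.comp (.drop 1)) .one) (.and
    (.eq (.add (hs.comp (.drop 2)) (hs.comp (.drop 2))) (.cantorDouble (.var 1) (.var 0))) (.and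
    (.lt (hx.comp (.drop 2)) (.betaModulus (.var 0) (hi.comp (.drop 2))))
    (.bex (.add (.var 1) .one) (.eq (.var 2)
      (.add (.mul (.var 0) (.betaModulus (.var 1) (hi.comp (.drop 3)))) (hx.comp (.drop 3))))))))

variable [Fact (PAm K)]

theorem bddSeqAt_iff_seqAt {s i x : K} : BddSeqAt s i x ↔ SeqAt s i x := by
  constructor
  · rintro ⟨a, -, b, -, hpair, hx, q, -, hq⟩
    exact ⟨a, b, hpair, hx, q, hq⟩
  · rintro ⟨a, b, hpair, hx, q, hq⟩
    have hsum : a + b ≤ s := add_le_of_add_self_eq_cantorDouble hpair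
    have hqa : q ≤ a := calc
      q ≤ q * betaModulus b i :=
        le_mul_of_one_le_right zero_le (Order.one_le_iff_pos.2 (betaModulus_pos b i))
      _ ≤ q * betaModulus b i + x := le_self_add
      _ = a := hq.symm
    exact ⟨a, Order.lt_add_one_iff.2 (le_self_add.trans hsum), b,
      Order.lt_add_one_iff.2 (le_add_self.trans hsum), hpair, hx, q, Order.lt_add_one_iff.2 hqa, hq⟩

theorem SeqAt.unique {s i x x' : K} (h : SeqAt s i x) (h' : SeqAt s i x') : x = x' := by
  obtain ⟨a, b, hpair, hx, q, hq⟩ := h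
  obtain ⟨a', b', hpair', hx', q', hq'⟩ := h'
  obtain ⟨rfl, rfl⟩ := cantorDouble_inj (Eq.trans hpair.symm hpair')
  exact (mul_add_injective_of_lt hx hx' (hq.symm.trans hq')).2

end BoundedSeqAt

section Triples

variable {K : Type} [lang.Structure K] {k : ℕ}

/-- The triple with entries `z, u, v`. -/
def triple (z u v : K) : K := quadPair (quadPair z u) v

theorem IsUTerm.triple {s t u : UTerm} (hs : IsUTerm s) (ht : IsUTerm t) (hu : IsUTerm u) :
    IsUTerm fun K _ v => triple (s K v) (t K v) (u K v) :=
  .quadPair (.quadPair hs ht) hu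

/-- The element `w` is a triple whose entries satisfy `Q`. The quantifiers are bounded, so that
complexity is preserved. -/
def OnTriple (Q : K → K → K → Prop) (w : K) : Prop :=
  ∃ p < w + 1, ∃ v < w + 1, w = quadPair p v ∧
    ∃ z < p + 1, ∃ u < p + 1, p = quadPair z u ∧ Q z u v

theorem OnTriple.exists_eq {Q : K → K → K → Prop} {w : K} :
    OnTriple Q w → ∃ z u v, w = triple z u v ∧ Q z u v := by
  rintro ⟨p, -, v, -, rfl, z, -, u, -, rfl, hQ⟩
  exact ⟨z, u, v, rfl, hQ⟩

theorem onTriple_triple [Fact (PAm K)] {Q : K → K → K → Prop} {z u v : K} :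
    OnTriple Q (triple z u v) ↔ Q z u v := by
  unfold OnTriple triple
  rw [exists_lt_quadPair_iff, exists_lt_quadPair_iff]

theorem triple_right_inj [Fact (PAm K)] {z u v z' u' v' : K} (h : triple z u v = triple z' u' v') :
    v = v' :=
  (quadPair_inj h).2

theorem USigma.onTriple {R : UPred} (hR : USigma k R) : USigma k fun K _ v =>
    OnTriple (fun z u x => R K (v.get 0 :: z :: u :: x :: v.drop 2)) (v.get 1) :=
  .bex (.add (.var 1) .one) (.bex (.add (.var 2) .one) (.and
    (.of_delta0 (.eq (.var 3) (.quadPair (.var 1) (.var 0))))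
    (.bex (.add (.var 1) .one) (.bex (.add (.var 2) .one) (.and
      (.of_delta0 (.eq (.var 3) (.quadPair (.var 1) (.var 0))))
      (hR.comp (.cons (.var 4) (.cons (.var 1) (.cons (.var 0) (.cons (.var 2) (.drop 6)))))))))))

theorem SigmaDef2.exists_hasWitness_triple [Fact (PAm K)] {F : K → K → Prop}
    (hF : SigmaDef2 (k + 2) K F) : ∃ (P : UPred) (p : Stream' K), UPi k P ∧
      ∀ u v, F u v ↔ ∃ z, ¬HasWitness P K (triple z u v) p := by
  obtain ⟨R, p, ⟨Q, ⟨Q', hQ', hQ⟩, hR⟩, hF⟩ := sigmaDef2_iff.1 hF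
  refine ⟨_, p, hQ'.onTriple.not, fun u v => ?_⟩
  rw [hF, hR]
  refine exists_congr fun z => not_congr ?_
  rw [hQ]
  exact exists_congr fun y => not_congr
    (onTriple_triple (Q := fun z u v => Q' K (y :: z :: u :: v :: p))).symm

end Triples

section Selection

variable {K : Type} [lang.Structure K] {k : ℕ} {P : UPred}

/-- The triple `w = ⟨z, u, v⟩` is outside `D` and proposes `v < a` as the image of `d`, on the
ground that `d` is the value at `c` of the sequence coded by `u`. -/
def IsCandidate (D : K → Prop) (c a d w : K) : Prop :=
  OnTriple (fun _ u v => v < a ∧ BddSeqAt u c d ∧ ¬D w) w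

theorem isCandidate_triple_iff [Fact (PAm K)] {D : K → Prop} {c a d z u v : K} :
    IsCandidate D c a d (triple z u v) ↔ v < a ∧ SeqAt u c d ∧ ¬D (triple z u v) := by
  rw [IsCandidate, onTriple_triple, bddSeqAt_iff_seqAt]

theorem IsCandidate.congr {D D' : K → Prop} {c a d w : K} (h : D w ↔ D' w) :
    IsCandidate D c a d w ↔ IsCandidate D' c a d w := by
  rw [IsCandidate, IsCandidate, h]

theorem UDelta0.isCandidate {B e r c a d w : UTerm} (hB : IsUTerm B) (he : IsUTerm e)
    (hr : IsUTerm r) (hc : IsUTerm c) (ha : IsUTerm a) (hd : IsUTerm d) (hw : IsUTerm w) :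
    UDelta0 fun K _ v =>
      IsCandidate (HasCodedWitness (B K v) (e K v) (r K v)) (c K v) (a K v) (d K v) (w K v) :=
  .bex (.add hw .one) (.bex (.add (hw.comp (.drop 1)) .one) (.and
    (.eq (hw.comp (.drop 2)) (.quadPair (.var 1) (.var 0)))
    (.bex (.add (.var 1) .one) (.bex (.add (.var 2) .one) (.and
      (.eq (.var 3) (.quadPair (.var 1) (.var 0)))
      (.and (.lt (.var 2) (ha.comp (.drop 4)))
        (.and (.bddSeqAt (.var 0) (hc.comp (.drop 4)) (hd.comp (.drop 4)))
          (.not (.hasCodedWitness (hB.comp (.drop 4)) (he.comp (.drop 4)) (hr.comp (.drop 4))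
            (hw.comp (.drop 4)))))))))))

/-- The graph of the function sending `d` to the last entry of its least candidate `w`, where the
candidates are the triples without witness. The set of triples with a witness enters through a code
for its part below some `b > w`, which keeps the complexity down when collection is not at hand. -/
def SelectGraph (P : UPred) (K : Type) [lang.Structure K] (c a d v : K) (p : Stream' K) : Prop :=
  ∃ z u b B e r, CodesDomain P K B e r b p ∧ triple z u v < b ∧
    IsCandidate (HasCodedWitness B e r) c a d (triple z u v) ∧
    ∀ w < triple z u v, ¬IsCandidate (HasCodedWitness B e r) c a d w

theorem UPi.selectGraph (hP : UPi k P) : USigma (k + 2) fun K _ v =>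
    SelectGraph P K (v.get 2) (v.get 3) (v.get 0) (v.get 1) (v.drop 4) := by
  have w : IsUTerm fun K _ v => triple (v.get 5) (v.get 4) (v.get 7) :=
    .triple (.var 5) (.var 4) (.var 7)
  exact .ex (.ex (.ex (.ex (.ex (.ex (.and
    (hP.codesDomain.comp (.cons (.var 2) (.cons (.var 1) (.cons (.var 0)
      (.cons (.var 3) (.drop 10)))))).toSigma
    (.of_delta0 (.and (.lt w (.var 3)) (.and
      (.isCandidate (.var 2) (.var 1) (.var 0) (.var 8) (.var 9) (.var 6) w)
      (.ball w (.not (.isCandidate (.var 3) (.var 2) (.var 1) (.var 9) (.var 10) (.var 7)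
        (.var 0)))))))))))))

/-- The relation `∃ z, ¬HasWitness P K (triple z u v) p` between `u` and `v` is injective. -/
def StageInjective (P : UPred) (K : Type) [lang.Structure K] (p : Stream' K) : Prop :=
  ∀ z z' u u' v, ¬HasWitness P K (triple z u v) p → ¬HasWitness P K (triple z' u' v) p → u = u'

theorem UPi.stageInjective (hP : UPi k P) : UPi (k + 2) (StageInjective P) :=
  .all (.all (.all (.all (.all (.imp
    (hP.not_hasWitness.comp (.cons (.triple (.var 4) (.var 2) (.var 0)) (.drop 5))).toSigma
    (.imp (hP.not_hasWitness.comp (.cons (.triple (.var 3) (.var 1) (.var 0)) (.drop 5))).toSigma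
      (.of_delta0 (.eq (.var 2) (.var 1)))))))))

variable [Fact (PAm K)] {c a d d' v v' : K} {p : Stream' K}

theorem SelectGraph.exists_isLeast (h : SelectGraph P K c a d v p) :
    ∃ z u, IsLeast {w | IsCandidate (HasWitness P K · p) c a d w} (triple z u v) := by
  obtain ⟨z, u, b, B, e, r, hcode, hb, hcand, hmin⟩ := h
  have hiff : ∀ w ≤ triple z u v, IsCandidate (HasCodedWitness B e r) c a d w ↔
      IsCandidate (HasWitness P K · p) c a d w := fun w hw =>
    IsCandidate.congr (hcode.hasCodedWitness_iff (hw.trans_lt hb))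
  refine ⟨z, u, (hiff _ le_rfl).1 hcand, fun w hw => ?_⟩
  by_contra! hlt
  exact hmin w hlt ((hiff w hlt.le).2 hw)

theorem SelectGraph.unique (h : SelectGraph P K c a d v p) (h' : SelectGraph P K c a d v' p) :
    v = v' := by
  obtain ⟨z, u, hleast⟩ := h.exists_isLeast
  obtain ⟨z', u', hleast'⟩ := h'.exists_isLeast
  exact triple_right_inj (hleast.unique hleast')

theorem LeastNumber.exists_selectGraph (hL : LeastNumber 0 K) {B e r b w : K}
    (hcode : CodesDomain P K B e r b p) (hw : w < b)
    (hcand : IsCandidate (HasWitness P K · p) c a d w) : ∃ v < a, SelectGraph P K c a d v p := by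
  have hdef : UDelta0 fun K _ v => IsCandidate (HasCodedWitness (v.get 1) (v.get 2) (v.get 3))
      (v.get 4) (v.get 5) (v.get 6) (v.get 0) :=
    .isCandidate (.var 1) (.var 2) (.var 3) (.var 4) (.var 5) (.var 6) (.var 0)
  have hcand' : IsCandidate (HasCodedWitness B e r) c a d w :=
    (IsCandidate.congr (hcode.hasCodedWitness_iff hw)).2 hcand
  obtain ⟨w₀, hw₀, hmin⟩ :=
    hL _ (.of_delta0 hdef) (B :: e :: r :: c :: a :: d :: .const 0) w hcand'
  have hle : w₀ ≤ w := le_of_not_gt fun hlt => hmin w hlt hcand'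
  obtain ⟨z, u, v, rfl, hv, -⟩ := hw₀.exists_eq
  exact ⟨v, hv, z, u, b, B, e, r, hcode, hle.trans_lt hw, hw₀, hmin⟩

theorem SelectGraph.injective (hinj : StageInjective P K p) (h : SelectGraph P K c a d v p)
    (h' : SelectGraph P K c a d' v p) : d = d' := by
  obtain ⟨z, u, hcand, -⟩ := h.exists_isLeast
  obtain ⟨z', u', hcand', -⟩ := h'.exists_isLeast
  obtain ⟨-, hd, hwit⟩ := isCandidate_triple_iff.1 hcand.out
  obtain ⟨-, hd', hwit'⟩ := isCandidate_triple_iff.1 hcand'.out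
  obtain rfl := hinj z z' u u' v hwit hwit'
  exact hd.unique hd'

end Selection

section Elementary

variable {M N : Type} [lang.Structure M] [lang.Structure N] [Fact (PAm M)] [Fact (PAm N)]
  {g : M → N} {k m : ℕ}

theorem IsUTerm.map_sigmaElem {t : UTerm} (ht : IsUTerm t) (hg : SigmaElem M N m g)
    (v : Stream' M) : g (t M v) = t N (v.map g) :=
  (USigma.transfer hg (.of_delta0 (.eq (.var 0) (ht.comp (.drop 1)))) (t M v :: v)).1 rfl

theorem SigmaElem.strictMono (hg : SigmaElem M N m g) : StrictMono g := fun x y hxy =>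
  (USigma.transfer hg (.of_delta0 (.lt (.var 0) (.var 1))) (x :: y :: .const 0)).1 hxy

theorem LeastNumber.of_sigmaElem (hL : LeastNumber 0 M) (hg : SigmaElem M N (m + 1) g) :
    LeastNumber 0 N := by
  rintro R ⟨Q, hQ, hRQ⟩ v x hx
  have hQ' : UDelta0 fun K _ v => Q K (v.head :: v.drop 2) := hQ.comp (.cons (.var 0) (.drop 2))
  have hdef : UDelta0 fun K _ v => ¬Q K v →
      ∃ x₀ < v.head + 1, ¬Q K (x₀ :: v.tail) ∧ ∀ y < x₀, Q K (y :: v.tail) :=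
    .imp hQ.not (.bex (.add (.var 0) .one) (.and hQ'.not
      (.ball (.var 0) (hQ.comp (.cons (.var 0) (.drop 3))))))
  have hM : ∀ v : Stream' M, ¬Q M v →
      ∃ x₀ < v.head + 1, ¬Q M (x₀ :: v.tail) ∧ ∀ y < x₀, Q M (y :: v.tail) := by
    intro v hv
    rw [← Stream'.eta v] at hv
    obtain ⟨x₀, hx₀, hmin⟩ := hL _ (UPi.of_delta0 hQ.not) v.tail v.head hv
    exact ⟨x₀, Order.lt_add_one_iff.2 (le_of_not_gt fun hlt => hmin _ hlt hv), hx₀,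
      fun y hy => not_not.1 (hmin y hy)⟩
  obtain ⟨x₀, -, hx₀, hmin⟩ :=
    hdef.transfer_forall hg hM (x :: v) fun hQx => (hRQ N _).2 hQx hx
  exact ⟨x₀, not_not.1 fun hR => hx₀ ((hRQ N _).1 hR), fun y hy => (hRQ N _).2 (hmin y hy)⟩

theorem ISig.exists_selectGraph {P : UPred} {p : Stream' M} {a z f v : M} {c d : N}
    (hI : ISig (k + 1) M) (hg : SigmaElem M N (k + 2) g) (hP : UPi k P)
    (hwit : ¬HasWitness P M (triple z f v) p) (hva : v < a) (hf : SeqAt (g f) c d) :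
    ∃ v' < g a, SelectGraph P N c (g a) d v' (p.map g) := by
  obtain ⟨B, e, r, hcode⟩ := hI.exists_codesDomain hP p (triple z f v + 1)
  have hcodeN : CodesDomain P N (g B) (g e) (g r) (g (triple z f v + 1)) (p.map g) :=
    (hP.codesDomain.toSigma.transfer hg (B :: e :: r :: (triple z f v + 1) :: p)).1 hcode
  have hwitN : ¬HasWitness P N (g (triple z f v)) (p.map g) :=
    (hP.not_hasWitness.toSigma.transfer hg (triple z f v :: p)).1 hwit
  have htriple : g (triple z f v) = triple (g z) (g f) (g v) :=
    (IsUTerm.triple (.var 0) (.var 1) (.var 2)).map_sigmaElem hg (z :: f :: v :: .const 0)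
  have hcand : IsCandidate (HasWitness P N · (p.map g)) c (g a) d (g (triple z f v)) := by
    rw [htriple] at hwitN ⊢
    exact isCandidate_triple_iff.2 ⟨hg.strictMono hva, hf, hwitN⟩
  exact (hI.leastNumber_zero.of_sigmaElem hg).exists_selectGraph hcodeN
    (hg.strictMono (lt_add_one _)) hcand

end Elementary

theorem statement_13_general (n : ℕ) (hn : 1 ≤ n) (M N : Type)
    [lang.Structure M] [lang.Structure N]
    (hPA : PAm M) (hI : ISig n M) (a : M)
    (hMinj : SigmaInjWhole M (n + 1) a)
    (g : M → N) (hel : SigmaElem M N (n + 1) g)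
    (c : N) (hMc : ∀ z : N, ∃ f : M, SeqAt (g f) c z) :
    SigmaInjWhole N (n + 1) (g a) := by
  obtain ⟨k, rfl⟩ := Nat.exists_eq_add_of_le' hn
  have : Fact (PAm M) := ⟨hPA⟩
  have : Fact (PAm N) := ⟨hPA.of_sigmaElem hel⟩
  obtain ⟨F, hF, htotal, -, hinj⟩ := hMinj
  obtain ⟨P, p, hP, hFP⟩ := hF.exists_hasWitness_triple
  have hinjM : StageInjective P M p := fun z z' u u' v h h' =>
    hinj u u' v ((hFP u v).2 ⟨z, h⟩) ((hFP u' v).2 ⟨z', h'⟩)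
  have hinjN : StageInjective P N (p.map g) := (hP.stageInjective.transfer hel p).1 hinjM
  refine ⟨fun d v => SelectGraph P N c (g a) d v (p.map g),
    sigmaDef2_iff.2 ⟨_, c :: g a :: p.map g, hP.selectGraph, fun _ _ => Iff.rfl⟩, fun d => ?_,
    fun d v v' => SelectGraph.unique, fun d d' v => SelectGraph.injective hinjN⟩
  obtain ⟨f, hf⟩ := hMc d
  obtain ⟨v, hva, hFv⟩ := htotal f
  obtain ⟨z, hwit⟩ := (hFP f v).1 hFv
  exact hI.exists_selectGraph hel hP hwit hva hf

end ArithFC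

namespace ArithFC

/-- Let `M ⊨ PA⁻ + IΣn` (`n ≥ 1`) with a Σ_{n+1}-definable injection
of `M` into `[0,a)`, and let `N = M[c]` (every element of `N` is `f(c)` for an
`M`-coded function `f` with domain `[0,a)`, with `c < a`) be a Σ_{n+1}-elementary
cofinal extension of `M`. Then there is a Σ_{n+1}-definable injection of `N`
into `[0,a)`. -/
theorem statement_13 (n : ℕ) (hn : 1 ≤ n) (M N : Type)
    [lang.Structure M] [lang.Structure N]
    (hPA : PAm M) (hI : ISig n M) (a : M)
    (hMinj : SigmaInjWhole M (n + 1) a)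
    (g : M → N) (hel : SigmaElem M N (n + 1) g) (hcf : Cofinal M N g)
    (c : N) (hca : c < g a)
    (hMc : ∀ z : N, ∃ f : M, CodesFunOn f a ∧ SeqAt (g f) c z) :
    SigmaInjWhole N (n + 1) (g a) :=
  statement_13_general n hn M N hPA hI a hMinj g hel c fun z => (hMc z).imp fun _ => And.right

end ArithFC
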